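/- arXiv:2501.18570 — 2 statements merged into one kernel-verified Lean document; each statement's English description precedes it below -/
import Mathlib

section
/- Fix a real number p with 0 < p < 1 and a nonnegative integer m. Let G ~ G(n,p) be the Erdős–Rényi random graph on vertex set {1,…,n}, and let X be the number of common edges of two independent uniformly random spanning trees of G, with X defined to be 0 when G is disconnected. Then P(X = m) → e^{−2/p} (2/p)^m / m! as n → ∞; that is, X converges in distribution to a Poisson distribution with expected value 2/p. -/
open Classical in
/-- `P(X = m)` for the Erdős–Rényi random graph `G ~ G(n,p)`: each graph `G` on
`{1,…,n}` carries probability `p^(e(G)) (1−p)^(C(n,2)−e(G))`; conditioned on a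
connected `G`, the probability that two independent uniformly random spanning trees of
`G` have exactly `m` common edges is the number of ordered pairs of spanning trees with
`m` common edges divided by the square of the number of spanning trees; on the event
that `G` is disconnected, `X` is declared to be `0`. -/
noncomputable def erdosRenyiProbCommonEdgesEq (n : ℕ) (p : ℝ) (m : ℕ) : ℝ :=
  ∑ G : SimpleGraph (Fin n),
    p ^ Nat.card G.edgeSet * (1 - p) ^ (n.choose 2 - Nat.card G.edgeSet) *
      (if G.Connected then
          (Nat.card {q : SimpleGraph (Fin n) × SimpleGraph (Fin n) //
              q.1 ≤ G ∧ q.2 ≤ G ∧ q.1.IsTree ∧ q.2.IsTree ∧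
                Nat.card (q.1 ⊓ q.2).edgeSet = m} : ℝ) /
            (Nat.card {T : SimpleGraph (Fin n) // T ≤ G ∧ T.IsTree} : ℝ) ^ 2
        else if m = 0 then 1 else 0)

/-!
By Moon's formula, a forest `F` on `n` vertices lies in `n⁻² ∏ n|C|` spanning trees of the complete
graph, `C` running over the components of `F`. Hence the number of common edges of two uniform
spanning trees of the complete graph has `k`-th binomial moment tending to `2 ^ k / k!` and is
asymptotically Poisson of mean `2`.

Let `Y` be the proportion of these trees that lie in a uniform random graph with
`M ∼ p (n choose 2)` edges. The second moment of `Y / 𝔼 Y` averages, over pairs of trees with `j`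
common edges, a density tending to `e^(2 - 2/p) p⁻ʲ`; this density tilts the Poisson law of mean `2`
into the one of mean `2 / p`. In particular the second moment tends to `1`, so that `Y` concentrates
and a uniform pair of trees inside the random graph may be replaced by the tilted pair. Finally
`G(n,p)` is a binomial mixture of the models with a fixed number of edges, and the number of edges
concentrates.
-/

namespace SpanningTreeOverlap

open Finset SimpleGraph Filter Topology
open scoped BigOperators Classical

section Components

variable {V : Type*}

lemma sum_inv_card_part {α : Type*} [DecidableEq α] {s : Finset α} (P : Finpartition s) :
    ∑ a ∈ s, (#(P.part a) : ℝ)⁻¹ = #P.parts := by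
  calc ∑ a ∈ s, (#(P.part a) : ℝ)⁻¹
      = ∑ C ∈ P.parts, ∑ a ∈ C, (#(P.part a) : ℝ)⁻¹ :=
        (sum_congr P.biUnion_parts.symm fun _ _ ↦ rfl).trans (sum_biUnion P.disjoint)
    _ = ∑ C ∈ P.parts, 1 := sum_congr rfl fun C hC ↦ by
        have hpos : (#C : ℝ) ≠ 0 := by exact_mod_cast (card_pos.2 (P.nonempty_of_mem_parts hC)).ne'
        rw [sum_congr rfl fun a ha ↦ by rw [P.part_eq_of_mem hC ha], sum_const, nsmul_eq_mul,
          mul_inv_cancel₀ hpos]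
    _ = #P.parts := by simp

variable {F : SimpleGraph V} {u v x y : V}

lemma reachable_sup_edge_iff (huv : u ≠ v) :
    (F ⊔ edge u v).Reachable x y ↔
      F.Reachable x y ∨ (F.Reachable x u ∧ F.Reachable v y) ∨
        (F.Reachable x v ∧ F.Reachable u y) := by
  constructor
  · rintro ⟨walk⟩
    induction walk with
    | nil => exact .inl .rfl
    | cons hadj _ ih =>
      rcases hadj with hF | he
      · have := hF.reachable
        rcases ih with h | ⟨h, h'⟩ | ⟨h, h'⟩
        exacts [.inl (this.trans h), .inr (.inl ⟨this.trans h, h'⟩),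
          .inr (.inr ⟨this.trans h, h'⟩)]
      · rw [edge_adj] at he
        rcases he with ⟨⟨rfl, rfl⟩ | ⟨rfl, rfl⟩, -⟩ <;> rcases ih with h | ⟨-, h⟩ | ⟨-, h⟩
        exacts [.inr (.inl ⟨.rfl, h⟩), .inr (.inl ⟨.rfl, h⟩), .inl h,
          .inr (.inr ⟨.rfl, h⟩), .inl h, .inr (.inr ⟨.rfl, h⟩)]
  · have mono {a b : V} (h : F.Reachable a b) : (F ⊔ edge u v).Reachable a b := h.mono le_sup_left
    have new : (F ⊔ edge u v).Reachable u v :=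
      Adj.reachable (.inr ((edge_adj ..).2 ⟨.inl ⟨rfl, rfl⟩, huv⟩))
    rintro (h | ⟨h, h'⟩ | ⟨h, h'⟩)
    exacts [mono h, (mono h).trans (new.trans (mono h')),
      (mono h).trans (new.symm.trans (mono h'))]

variable [Fintype V]

/-- The partition of the vertex set into the connected components of `F`. -/
noncomputable def componentPartition (F : SimpleGraph V) : Finpartition (univ : Finset V) :=
  Finpartition.ofSetoid F.reachableSetoid

/-- The vertex set of the connected component of `u` in `F`. -/
noncomputable abbrev component (F : SimpleGraph V) (u : V) : Finset V :=
  (componentPartition F).part u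

lemma mem_component_iff : x ∈ component F u ↔ F.Reachable u x :=
  Finpartition.mem_part_ofSetoid_iff_rel

lemma component_eq_iff :
    component F u = component F v ↔ F.Reachable u v := by
  rw [← mem_component_iff, Finpartition.mem_part_iff_part_eq_part _ (mem_univ _) (mem_univ _)]
  exact eq_comm

lemma component_mem_parts (F : SimpleGraph V) (u : V) :
    component F u ∈ (componentPartition F).parts :=
  (Finpartition.part_mem _).2 (mem_univ u)

lemma mem_component_parts_iff {C : Finset V} :
    C ∈ (componentPartition F).parts ↔ ∃ w, component F w = C :=
  ⟨fun hC ↦ let ⟨w, _, hw⟩ := (componentPartition F).part_surjOn hC; ⟨w, hw⟩,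
    fun ⟨w, hw⟩ ↦ hw ▸ component_mem_parts F w⟩

lemma card_component_pos (F : SimpleGraph V) (u : V) : 0 < #(component F u) :=
  card_pos.2 ⟨u, mem_component_iff.2 .rfl⟩

lemma component_sup_edge (h : ¬ F.Reachable u v) (w : V) :
    component (F ⊔ edge u v) w =
      if F.Reachable u w ∨ F.Reachable v w then
        component F u ∪ component F v
      else component F w := by
  have huv : u ≠ v := fun h' ↦ h (h' ▸ .rfl)
  ext y
  simp only [mem_component_iff, reachable_sup_edge_iff huv]
  split_ifs with hw
  · simp only [mem_union, mem_component_iff]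
    constructor
    · rcases hw with hw | hw <;> rintro (h' | ⟨-, h'⟩ | ⟨-, h'⟩)
      exacts [.inl (hw.trans h'), .inr h', .inl h', .inr (hw.trans h'), .inr h', .inl h']
    · rcases hw with hw | hw <;> rintro (h' | h')
      exacts [.inl (hw.symm.trans h'), .inr (.inl ⟨hw.symm, h'⟩),
        .inr (.inr ⟨hw.symm, h'⟩), .inl (hw.symm.trans h')]
  · rw [not_or, reachable_comm, @reachable_comm _ _ v] at hw
    simp only [mem_component_iff, hw.1, hw.2, false_and, or_false]

lemma parts_sup_edge (h : ¬ F.Reachable u v) :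
    (componentPartition (F ⊔ edge u v)).parts =
      insert (component F u ∪ component F v)
        (((componentPartition F).parts.erase (component F u)).erase
          (component F v)) := by
  ext C
  simp only [mem_component_parts_iff, mem_insert, mem_erase, component_sup_edge h]
  constructor
  · rintro ⟨w, rfl⟩
    split_ifs with hw
    · exact .inl rfl
    · rw [not_or] at hw
      refine .inr ⟨fun e ↦ hw.2 (component_eq_iff.1 e.symm),
        fun e ↦ hw.1 (component_eq_iff.1 e.symm), w, rfl⟩
  · rintro (rfl | ⟨hv, hu, w, rfl⟩)
    · exact ⟨u, if_pos (.inl .rfl)⟩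
    · refine ⟨w, if_neg ?_⟩
      rintro (h' | h')
      exacts [hu (component_eq_iff.2 h'.symm), hv (component_eq_iff.2 h'.symm)]

lemma card_component_union (h : ¬ F.Reachable u v) :
    #(component F u ∪ component F v) =
      #(component F u) + #(component F v) :=
  card_union_of_disjoint <| (componentPartition F).disjoint (component_mem_parts F u)
    (component_mem_parts F v) fun e ↦ h (component_eq_iff.1 e)

lemma component_union_notMem_parts (h : ¬ F.Reachable u v) :
    component F u ∪ component F v ∉
      (componentPartition F).parts := by
  intro hmem
  obtain ⟨w, hw⟩ := mem_component_parts_iff.1 hmem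
  have reach {y : V} (hy : y = u ∨ y = v) : F.Reachable w y := by
    rw [← mem_component_iff, hw, mem_union, mem_component_iff, mem_component_iff]
    rcases hy with rfl | rfl
    exacts [.inl .rfl, .inr .rfl]
  exact h ((reach (.inl rfl)).symm.trans (reach (.inr rfl)))

lemma component_mem_parts_erase (h : ¬ F.Reachable u v) :
    component F v ∈
      (componentPartition F).parts.erase (component F u) :=
  mem_erase.2 ⟨fun e ↦ h (component_eq_iff.1 e.symm), component_mem_parts F v⟩

lemma card_parts_sup_edge (h : ¬ F.Reachable u v) :
    #(componentPartition (F ⊔ edge u v)).parts + 1 = #(componentPartition F).parts := by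
  rw [parts_sup_edge h, card_insert_of_notMem, card_erase_add_one (component_mem_parts_erase h),
    card_erase_add_one (component_mem_parts F u)]
  exact fun hmem ↦ component_union_notMem_parts h (mem_of_mem_erase (mem_of_mem_erase hmem))

end Components

section Forests

variable {V : Type*} {F T : SimpleGraph V} {u v : V}

lemma ne_of_not_reachable (h : ¬ F.Reachable u v) : u ≠ v :=
  fun huv ↦ h (huv ▸ .rfl)

lemma adj_of_le_acyclic_of_reachable (hT : T.IsAcyclic) (hle : F ≤ T) (hadj : T.Adj u v)
    (hreach : F.Reachable u v) : F.Adj u v := by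
  have hacyclic : (F ⊔ edge u v).IsAcyclic := hT.anti (sup_le hle (edge_le_iff _ |>.2 (.inr hadj)))
  exact ((isAcyclic_sup_fromEdgeSet_iff.1 hacyclic).2 hreach).resolve_left hadj.ne

section Finite

variable [Finite V]

lemma ncard_edgeSet_sup_edge (hne : u ≠ v) (hadj : ¬ F.Adj u v) :
    (F ⊔ edge u v).edgeSet.ncard = F.edgeSet.ncard + 1 := by
  rw [edgeSet_sup, edgeSet_edge_of_ne hne, Set.union_singleton]
  exact Set.ncard_insert_of_notMem hadj

@[elab_as_elim]
lemma forest_induction [Nonempty V] {motive : ∀ F : SimpleGraph V, F.IsAcyclic → Prop}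
    (tree : ∀ (T : SimpleGraph V) (hT : T.IsTree), motive T hT.isAcyclic)
    (merge : ∀ (F : SimpleGraph V) (hF : F.IsAcyclic), ¬ F.Preconnected →
      (∀ u v (huv : ¬ F.Reachable u v),
        motive (F ⊔ edge u v) (hF.sup_edge_of_not_reachable huv)) → motive F hF)
    {F : SimpleGraph V} (hF : F.IsAcyclic) : motive F hF := by
  induction F using WellFoundedGT.induction with
  | ind F ih =>
    by_cases hconn : F.Preconnected
    · exact tree F ⟨⟨hconn⟩, hF⟩
    · exact merge F hF hconn fun u v huv ↦
        ih _ (lt_sup_edge (G := F) u v (ne_of_not_reachable huv) fun h ↦ huv h.reachable)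
          (hF.sup_edge_of_not_reachable huv)

end Finite

variable [Fintype V]

lemma ncard_edgeSet_add_one_of_isTree (hT : T.IsTree) :
    T.edgeSet.ncard + 1 = Fintype.card V := by
  rw [← coe_edgeFinset, Set.ncard_coe_finset, hT.card_edgeFinset]

lemma card_adj_pairs (G : SimpleGraph V) :
    #{q : V × V | G.Adj q.1 q.2} = 2 * G.edgeSet.ncard := by
  rw [← coe_edgeFinset, Set.ncard_coe_finset, ← sum_degrees_eq_twice_card_edges]
  simp only [card_filter, Fintype.sum_prod_type, ← card_neighborFinset_eq_degree,
    neighborFinset_eq_filter]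

lemma parts_of_preconnected [Nonempty V] (hF : F.Preconnected) :
    (componentPartition F).parts = {univ} := by
  have component_eq (w : V) : component F w = univ :=
    eq_univ_of_forall fun x ↦ mem_component_iff.2 (hF w x)
  ext C
  simp [mem_component_parts_iff, component_eq, eq_comm]

lemma ncard_edgeSet_add_card_parts [Nonempty V] (hF : F.IsAcyclic) :
    F.edgeSet.ncard + #(componentPartition F).parts = Fintype.card V := by
  induction hF using forest_induction with
  | tree T hT =>
    rw [parts_of_preconnected hT.connected.preconnected, card_singleton,
      ncard_edgeSet_add_one_of_isTree hT]
  | merge F _ hconn ih =>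
    obtain ⟨u, v, huv⟩ : ∃ u v, ¬ F.Reachable u v := by simpa [Preconnected] using hconn
    rw [← ih u v huv, ncard_edgeSet_sup_edge (ne_of_not_reachable huv) fun h ↦ huv h.reachable,
      ← card_parts_sup_edge huv]
    ring

variable (V) in
/-- The trees spanning the vertex set `V`, that is, the spanning trees of the complete graph. -/
noncomputable def spanningTrees : Finset (SimpleGraph V) := {T | T.IsTree}

/-- The spanning trees of the complete graph that contain all edges of `F`. -/
noncomputable def treesContaining (F : SimpleGraph V) : Finset (SimpleGraph V) :=
  {T ∈ spanningTrees V | F ≤ T}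

lemma mem_spanningTrees : T ∈ spanningTrees V ↔ T.IsTree :=
  mem_filter_univ _

lemma mem_treesContaining : T ∈ treesContaining F ↔ T.IsTree ∧ F ≤ T := by
  rw [treesContaining, mem_filter, mem_spanningTrees]

lemma treesContaining_of_isTree (hF : F.IsTree) : treesContaining F = {F} := by
  have := hF.connected.nonempty
  ext T
  rw [mem_treesContaining, mem_singleton]
  refine ⟨fun ⟨hT, hle⟩ ↦ ?_, fun h ↦ by rw [h]; exact ⟨hF, le_rfl⟩⟩
  exact ((maximal_isAcyclic_iff_isTree.2 hF).eq_of_le hT.isAcyclic hle).symm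

lemma treesContaining_eq_empty (hF : ¬ F.IsAcyclic) : treesContaining F = ∅ :=
  filter_eq_empty_iff.2 fun _ hT hle ↦ hF ((mem_filter.1 hT).2.isAcyclic.anti hle)

lemma treesContaining_sup_edge (hne : u ≠ v) :
    treesContaining (F ⊔ edge u v) = {T ∈ treesContaining F | T.Adj u v} := by
  ext T
  simp only [mem_treesContaining, mem_filter, sup_le_iff, edge_le_iff, hne, false_or, and_assoc]

/-- The ordered pairs of vertices lying in different components of `F`. -/
noncomputable def separatedPairs (F : SimpleGraph V) : Finset (V × V) :=
  {q | ¬ F.Reachable q.1 q.2}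

lemma mem_separatedPairs {q : V × V} : q ∈ separatedPairs F ↔ ¬ F.Reachable q.1 q.2 := by
  simp [separatedPairs]

lemma card_separatedPairs_adj [Nonempty V] (hT : T ∈ treesContaining F) :
    #{q ∈ separatedPairs F | T.Adj q.1 q.2} + 2 = 2 * #(componentPartition F).parts := by
  obtain ⟨hT, hle⟩ := mem_treesContaining.1 hT
  have hF := ncard_edgeSet_add_card_parts (hT.isAcyclic.anti hle)
  have hTcard := ncard_edgeSet_add_one_of_isTree hT
  have hsplit := card_filter_add_card_filter_not (s := {q : V × V | T.Adj q.1 q.2})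
    (fun q ↦ F.Reachable q.1 q.2)
  have hsame (q : V × V) : T.Adj q.1 q.2 ∧ F.Reachable q.1 q.2 ↔ F.Adj q.1 q.2 :=
    ⟨fun h ↦ adj_of_le_acyclic_of_reachable hT.isAcyclic hle h.1 h.2,
      fun h ↦ ⟨hle h, h.reachable⟩⟩
  simp only [filter_filter, hsame, card_adj_pairs] at hsplit
  simp only [separatedPairs, filter_filter, and_comm (b := T.Adj _ _)]
  omega

-- Both sides count pairs `(T, q)` where `q` is an orientation of an edge of `T` outside `F`.
lemma sum_card_treesContaining_sup_edge [Nonempty V] (F : SimpleGraph V) :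
    ∑ q ∈ separatedPairs F, (#(treesContaining (F ⊔ edge q.1 q.2)) : ℝ) =
      2 * (#(componentPartition F).parts - 1) * #(treesContaining F) := by
  have hcount := sum_card_bipartiteAbove_eq_sum_card_bipartiteBelow
    (fun (T : SimpleGraph V) (q : V × V) ↦ T.Adj q.1 q.2)
    (s := treesContaining F) (t := separatedPairs F)
  have hAbove : ∀ T ∈ treesContaining F,
      (#{q ∈ separatedPairs F | T.Adj q.1 q.2} : ℝ) = 2 * (#(componentPartition F).parts - 1) :=
    fun T hT ↦ by
      rw [mul_sub, ← Nat.cast_ofNat (R := ℝ), ← Nat.cast_mul, ← card_separatedPairs_adj hT]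
      push_cast
      ring
  calc ∑ q ∈ separatedPairs F, (#(treesContaining (F ⊔ edge q.1 q.2)) : ℝ)
      = ∑ q ∈ separatedPairs F, (#{T ∈ treesContaining F | T.Adj q.1 q.2} : ℝ) :=
        sum_congr rfl fun q hq ↦ by
          rw [treesContaining_sup_edge (ne_of_not_reachable (mem_separatedPairs.1 hq))]
    _ = ∑ T ∈ treesContaining F, (#{q ∈ separatedPairs F | T.Adj q.1 q.2} : ℝ) := by
        exact_mod_cast hcount.symm
    _ = _ := by rw [sum_congr rfl hAbove, sum_const, nsmul_eq_mul, mul_comm]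

lemma sum_separatedPairs_inv_fst (F : SimpleGraph V) :
    ∑ q ∈ separatedPairs F, (#(component F q.1) : ℝ)⁻¹ =
      Fintype.card V * (#(componentPartition F).parts - 1) := by
  have hfiber (u : V) : ∑ v, (if ¬ F.Reachable u v then (#(component F u) : ℝ)⁻¹ else 0) =
      Fintype.card V * (#(component F u) : ℝ)⁻¹ - 1 := by
    have hcard : (#{v | ¬ F.Reachable u v} : ℝ) = Fintype.card V - #(component F u) := by
      have hcompl : ({v | ¬ F.Reachable u v} : Finset V) = (component F u)ᶜ := by
        ext v
        simp [mem_component_iff]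
      rw [hcompl, card_compl, Nat.cast_sub (card_le_univ _)]
    have hpos : (#(component F u) : ℝ) ≠ 0 := by exact_mod_cast (card_component_pos F u).ne'
    rw [← sum_filter, sum_const, nsmul_eq_mul, hcard]
    field_simp
  rw [separatedPairs, sum_filter, Fintype.sum_prod_type, sum_congr rfl fun u _ ↦ hfiber u,
    sum_sub_distrib, ← mul_sum, sum_inv_card_part, sum_const, card_univ, nsmul_eq_mul]
  ring

lemma sum_separatedPairs_inv (F : SimpleGraph V) :
    ∑ q ∈ separatedPairs F, ((#(component F q.1) : ℝ)⁻¹ + (#(component F q.2) : ℝ)⁻¹) =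
      2 * Fintype.card V * (#(componentPartition F).parts - 1) := by
  have hswap : ∑ q ∈ separatedPairs F, (#(component F q.2) : ℝ)⁻¹ =
      ∑ q ∈ separatedPairs F, (#(component F q.1) : ℝ)⁻¹ :=
    sum_equiv (Equiv.prodComm V V) (by simp [mem_separatedPairs, reachable_comm]) (by simp)
  rw [sum_add_distrib, hswap, sum_separatedPairs_inv_fst]
  ring

/-- The product `∏ n|C|` over the components `C` of `F`, where `n` is the number of vertices;
for a forest it is `n²` times the number of spanning trees containing `F`. -/
noncomputable def forestWeight (F : SimpleGraph V) : ℝ :=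
  ∏ C ∈ (componentPartition F).parts, (Fintype.card V * #C : ℝ)

lemma forestWeight_sup_edge (h : ¬ F.Reachable u v) :
    forestWeight (F ⊔ edge u v) * Fintype.card V =
      forestWeight F * ((#(component F u) : ℝ)⁻¹ + (#(component F v) : ℝ)⁻¹) := by
  have hu : (#(component F u) : ℝ) ≠ 0 := by exact_mod_cast (card_component_pos F u).ne'
  have hv : (#(component F v) : ℝ) ≠ 0 := by exact_mod_cast (card_component_pos F v).ne'
  rw [forestWeight, forestWeight, parts_sup_edge h, prod_insert, card_component_union h,
    ← mul_prod_erase _ _ (component_mem_parts F u),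
    ← mul_prod_erase _ _ (component_mem_parts_erase h)]
  · push_cast
    field_simp
    ring
  · exact fun hmem ↦ component_union_notMem_parts h (mem_of_mem_erase (mem_of_mem_erase hmem))

theorem card_treesContaining_mul_sq [Nonempty V] (hF : F.IsAcyclic) :
    (#(treesContaining F) : ℝ) * Fintype.card V ^ 2 = forestWeight F := by
  induction hF using forest_induction with
  | tree T hT =>
    rw [treesContaining_of_isTree hT, forestWeight,
      parts_of_preconnected hT.connected.preconnected]
    simp [sq]
  | merge F _ hconn ih =>
    have hn : (Fintype.card V : ℝ) ≠ 0 := by exact_mod_cast Fintype.card_ne_zero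
    have hparts : (#(componentPartition F).parts : ℝ) - 1 ≠ 0 := fun h ↦ hconn <| by
      obtain ⟨C, hC⟩ := card_eq_one.1 (show #(componentPartition F).parts = 1 by
        exact_mod_cast sub_eq_zero.1 h)
      have eq_C (w : V) : component F w = C := by
        simpa [hC] using component_mem_parts F w
      exact fun u v ↦ component_eq_iff.1 ((eq_C u).trans (eq_C v).symm)
    have hsum : (∑ q ∈ separatedPairs F, (#(treesContaining (F ⊔ edge q.1 q.2)) : ℝ)) *
        Fintype.card V ^ 3 = forestWeight F * ∑ q ∈ separatedPairs F,
          ((#(component F q.1) : ℝ)⁻¹ + (#(component F q.2) : ℝ)⁻¹) := by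
      rw [sum_mul, mul_sum]
      refine sum_congr rfl fun q hq ↦ ?_
      rw [mem_separatedPairs] at hq
      rw [← forestWeight_sup_edge hq, ← ih _ _ hq]
      ring
    rw [sum_card_treesContaining_sup_edge, sum_separatedPairs_inv] at hsum
    refine mul_left_cancel₀ (mul_ne_zero (mul_ne_zero two_ne_zero hn) hparts) ?_
    linear_combination hsum

theorem card_treesContaining_sup_edge [Nonempty V] (hF : F.IsAcyclic) (h : ¬ F.Reachable u v) :
    (#(treesContaining (F ⊔ edge u v)) : ℝ) * Fintype.card V =
      #(treesContaining F) * ((#(component F u) : ℝ)⁻¹ + (#(component F v) : ℝ)⁻¹) := by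
  have hn : (Fintype.card V : ℝ) ≠ 0 := by exact_mod_cast Fintype.card_ne_zero
  have hweight := forestWeight_sup_edge h
  rw [← card_treesContaining_mul_sq hF,
    ← card_treesContaining_mul_sq (hF.sup_edge_of_not_reachable h)] at hweight
  refine mul_left_cancel₀ (pow_ne_zero 2 hn) ?_
  linear_combination hweight

end Forests

section Moments

variable {V : Type*} [Fintype V] {F T : SimpleGraph V} {u v : V}

variable (V) in
/-- The graphs on the vertex set `V` with exactly `M` edges. -/
noncomputable def graphsWithEdges (M : ℕ) : Finset (SimpleGraph V) := {G | G.edgeSet.ncard = M}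

lemma mem_graphsWithEdges {G : SimpleGraph V} {M : ℕ} :
    G ∈ graphsWithEdges V M ↔ G.edgeSet.ncard = M := by
  simp [graphsWithEdges]

lemma graphsWithEdges_zero : graphsWithEdges V 0 = {⊥} := by
  ext G
  rw [mem_graphsWithEdges, Set.ncard_eq_zero, edgeSet_eq_empty, mem_singleton]

-- A graph with `k + 1` edges together with an oriented edge of it is the same as
-- a graph with `k` edges together with an oriented nonedge.
lemma sum_graphsWithEdges_succ (k : ℕ) (f : SimpleGraph V → ℝ) :
    2 * (k + 1) * ∑ F ∈ graphsWithEdges V (k + 1), f F =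
      ∑ F ∈ graphsWithEdges V k, ∑ q : V × V with Fᶜ.Adj q.1 q.2, f (F ⊔ edge q.1 q.2) := by
  calc 2 * (k + 1) * ∑ F ∈ graphsWithEdges V (k + 1), f F
      = ∑ F ∈ graphsWithEdges V (k + 1), ∑ q : V × V with F.Adj q.1 q.2, f F := by
        rw [mul_sum]
        refine sum_congr rfl fun F hF ↦ ?_
        rw [sum_const, card_adj_pairs, mem_graphsWithEdges.1 hF, nsmul_eq_mul]
        push_cast
        rfl
    _ = _ := by
        rw [sum_sigma', sum_sigma']
        have hsdiff {F : SimpleGraph V} {u v : V} (h : F.Adj u v) :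
            F \ edge u v ⊔ edge u v = F := sdiff_sup_cancel ((edge_le_iff _).2 (.inr h))
        refine sum_bij' (fun x _ ↦ ⟨x.1 \ edge x.2.1 x.2.2, x.2⟩)
          (fun x _ ↦ ⟨x.1 ⊔ edge x.2.1 x.2.2, x.2⟩) ?_ ?_ ?_ ?_ ?_ <;> rintro ⟨F, u, v⟩ hx <;>
          simp only [mem_sigma, mem_filter, mem_univ, true_and, mem_graphsWithEdges,
            compl_adj] at hx ⊢
        · have hnadj : ¬ (F \ edge u v).Adj u v := by simp [edge_adj, hx.2.ne]
          have hcard := ncard_edgeSet_sup_edge hx.2.ne hnadj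
          rw [hsdiff hx.2] at hcard
          exact ⟨by omega, hx.2.ne, hnadj⟩
        · exact ⟨by rw [ncard_edgeSet_sup_edge hx.2.1 hx.2.2, hx.1], by simp [edge_adj, hx.2.1]⟩
        · rw [hsdiff hx.2]
        · rw [sup_sdiff_right_self, sdiff_edge _ hx.2.2]
        · rw [hsdiff hx.2]

/-- The probability that a uniformly random spanning tree of the complete graph contains `F`. -/
noncomputable def inclusionProb (F : SimpleGraph V) : ℝ :=
  #(treesContaining F) / #(spanningTrees V)

lemma inclusionProb_nonneg (F : SimpleGraph V) : 0 ≤ inclusionProb F := by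
  unfold inclusionProb
  positivity

lemma spanningTrees_nonempty [Nonempty V] : (spanningTrees V).Nonempty :=
  let ⟨T, _, hT⟩ := (connected_top (V := V)).exists_isTree_le
  ⟨T, by simpa [spanningTrees] using hT⟩

lemma inclusionProb_bot [Nonempty V] : inclusionProb (⊥ : SimpleGraph V) = 1 := by
  have : treesContaining (⊥ : SimpleGraph V) = spanningTrees V := by simp [treesContaining]
  rw [inclusionProb, this, div_self]
  exact_mod_cast (card_pos.2 spanningTrees_nonempty).ne'

lemma inclusionProb_eq_zero (hF : ¬ F.IsAcyclic) : inclusionProb F = 0 := by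
  simp [inclusionProb, treesContaining_eq_empty hF]

lemma inclusionProb_sup_edge [Nonempty V] (hF : F.IsAcyclic) (h : ¬ F.Reachable u v) :
    inclusionProb (F ⊔ edge u v) = ((#(component F u) : ℝ)⁻¹ + (#(component F v) : ℝ)⁻¹) /
      Fintype.card V * inclusionProb F := by
  have hn : (Fintype.card V : ℝ) ≠ 0 := by exact_mod_cast Fintype.card_ne_zero
  rw [inclusionProb, inclusionProb, eq_div_of_mul_eq hn (card_treesContaining_sup_edge hF h)]
  ring

lemma inclusionProb_sup_edge_le [Nonempty V] (h : Fᶜ.Adj u v) :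
    inclusionProb (F ⊔ edge u v) ≤ 2 / Fintype.card V * inclusionProb F := by
  by_cases hac : (F ⊔ edge u v).IsAcyclic
  · obtain ⟨hF, hreach⟩ := isAcyclic_sup_fromEdgeSet_iff.1 hac
    have hinv (w : V) : (#(component F w) : ℝ)⁻¹ ≤ 1 :=
      inv_le_one_of_one_le₀ (by exact_mod_cast card_component_pos F w)
    rw [inclusionProb_sup_edge hF fun hr ↦ (hreach hr).elim h.1 h.2]
    gcongr
    · exact inclusionProb_nonneg F
    · linarith [hinv u, hinv v]
  · rw [inclusionProb_eq_zero hac]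
    have := inclusionProb_nonneg F
    positivity

lemma component_of_notMem_support (hu : u ∉ F.support) : component F u = {u} := by
  ext x
  rw [mem_component_iff, mem_singleton]
  refine ⟨?_, fun h ↦ h ▸ .rfl⟩
  rintro ⟨walk⟩
  cases walk with
  | nil => rfl
  | cons hadj _ => exact (hu ⟨_, hadj⟩).elim

lemma inclusionProb_sup_edge_of_isolated [Nonempty V] (huv : u ≠ v) (hu : u ∉ F.support)
    (hv : v ∉ F.support) :
    inclusionProb (F ⊔ edge u v) = 2 / Fintype.card V * inclusionProb F := by
  by_cases hF : F.IsAcyclic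
  · have hreach : ¬ F.Reachable u v := by
      rw [← mem_component_iff, component_of_notMem_support hu, mem_singleton]
      exact huv.symm
    rw [inclusionProb_sup_edge hF hreach, component_of_notMem_support hu,
      component_of_notMem_support hv]
    norm_num
  · rw [inclusionProb_eq_zero hF,
      inclusionProb_eq_zero fun h ↦ hF (isAcyclic_sup_fromEdgeSet_iff.1 h).1, mul_zero]

lemma card_support_le (F : SimpleGraph V) : #{u | u ∈ F.support} ≤ 2 * F.edgeSet.ncard := by
  rw [← card_adj_pairs]
  refine (card_le_card fun u hu ↦ ?_).trans (card_image_le (f := Prod.fst))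
  obtain ⟨v, hv⟩ := (mem_filter.1 hu).2
  exact mem_image.2 ⟨(u, v), by simpa using hv, rfl⟩

lemma card_isolated_offDiag_ge (F : SimpleGraph V) :
    (Fintype.card V : ℝ) ^ 2 - (4 * F.edgeSet.ncard + 1) * Fintype.card V ≤
      #({u | u ∉ F.support} : Finset V).offDiag := by
  have hsupp : (#{u | u ∈ F.support} : ℝ) ≤ 2 * F.edgeSet.ncard := mod_cast card_support_le F
  have hsplit : (#{u | u ∈ F.support} : ℝ) + #{u | u ∉ F.support} = Fintype.card V := by
    exact_mod_cast card_filter_add_card_filter_not (s := univ) (· ∈ F.support)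
  rw [offDiag_card, Nat.cast_sub (Nat.le_mul_self _), Nat.cast_mul]
  have hcard : (0 : ℝ) ≤ Fintype.card V := Nat.cast_nonneg _
  have hsupp0 : (0 : ℝ) ≤ #{u | u ∈ F.support} := Nat.cast_nonneg _
  nlinarith [hcard, hsupp0]

variable (V) in
/-- The `k`-th binomial moment `𝔼 (X choose k)` of the number `X` of common edges of two
independent uniform spanning trees of the complete graph, written as the sum over all `k`-edge
graphs `F` of the probability that both trees contain `F`. -/
noncomputable def overlapMoment (k : ℕ) : ℝ := ∑ F ∈ graphsWithEdges V k, inclusionProb F ^ 2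

lemma overlapMoment_zero [Nonempty V] : overlapMoment V 0 = 1 := by
  rw [overlapMoment, graphsWithEdges_zero, sum_singleton, inclusionProb_bot, one_pow]

lemma overlapMoment_succ_le [Nonempty V] (k : ℕ) :
    (k + 1) * overlapMoment V (k + 1) ≤ 2 * overlapMoment V k := by
  have hn : (Fintype.card V : ℝ) ≠ 0 := by exact_mod_cast Fintype.card_ne_zero
  have hterm (F : SimpleGraph V) :
      ∑ q : V × V with Fᶜ.Adj q.1 q.2, inclusionProb (F ⊔ edge q.1 q.2) ^ 2 ≤
        4 * inclusionProb F ^ 2 := by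
    calc ∑ q : V × V with Fᶜ.Adj q.1 q.2, inclusionProb (F ⊔ edge q.1 q.2) ^ 2
        ≤ ∑ q : V × V with Fᶜ.Adj q.1 q.2, (2 / Fintype.card V * inclusionProb F) ^ 2 :=
          sum_le_sum fun q hq ↦ pow_le_pow_left₀ (inclusionProb_nonneg _)
            (inclusionProb_sup_edge_le (mem_filter.1 hq).2) 2
      _ ≤ ∑ _q : V × V, (2 / Fintype.card V * inclusionProb F) ^ 2 :=
          sum_le_sum_of_subset_of_nonneg (subset_univ _) fun _ _ _ ↦ sq_nonneg _
      _ = 4 * inclusionProb F ^ 2 := by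
          simp only [sum_const, card_univ, Fintype.card_prod, nsmul_eq_mul]
          push_cast
          field_simp
          ring
  have hsum := sum_le_sum fun F (_ : F ∈ graphsWithEdges V k) ↦ hterm F
  rw [← sum_graphsWithEdges_succ k (inclusionProb · ^ 2), ← mul_sum] at hsum
  unfold overlapMoment
  linarith

lemma le_overlapMoment_succ [Nonempty V] (k : ℕ) :
    2 * (1 - (4 * k + 1) / Fintype.card V) * overlapMoment V k ≤
      (k + 1) * overlapMoment V (k + 1) := by
  have hn : (Fintype.card V : ℝ) ≠ 0 := by exact_mod_cast Fintype.card_ne_zero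
  have hterm (F : SimpleGraph V) (hF : F ∈ graphsWithEdges V k) :
      4 * (1 - (4 * k + 1) / Fintype.card V) * inclusionProb F ^ 2 ≤
        ∑ q : V × V with Fᶜ.Adj q.1 q.2, inclusionProb (F ⊔ edge q.1 q.2) ^ 2 := by
    set I : Finset V := {u | u ∉ F.support}
    have hI {q : V × V} (hq : q ∈ I.offDiag) :
        q.1 ∉ F.support ∧ q.2 ∉ F.support ∧ q.1 ≠ q.2 := by simpa [I] using hq
    have hcard := card_isolated_offDiag_ge F
    rw [mem_graphsWithEdges.1 hF] at hcard
    calc 4 * (1 - (4 * k + 1) / Fintype.card V) * inclusionProb F ^ 2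
        = ((Fintype.card V : ℝ) ^ 2 - (4 * k + 1) * Fintype.card V) *
            (2 / Fintype.card V * inclusionProb F) ^ 2 := by
          field_simp
          ring
      _ ≤ #I.offDiag * (2 / Fintype.card V * inclusionProb F) ^ 2 := by gcongr
      _ = ∑ q ∈ I.offDiag, inclusionProb (F ⊔ edge q.1 q.2) ^ 2 := by
          rw [← nsmul_eq_mul, ← sum_const]
          refine sum_congr rfl fun q hq ↦ ?_
          obtain ⟨h₁, h₂, hne⟩ := hI hq
          rw [inclusionProb_sup_edge_of_isolated hne h₁ h₂]
      _ ≤ _ := by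
          refine sum_le_sum_of_subset_of_nonneg (fun q hq ↦ ?_) fun _ _ _ ↦ sq_nonneg _
          obtain ⟨h₁, -, hne⟩ := hI hq
          exact mem_filter.2 ⟨mem_univ _, hne, fun h ↦ h₁ ⟨_, h⟩⟩
  have hsum := sum_le_sum hterm
  rw [← sum_graphsWithEdges_succ k (inclusionProb · ^ 2), ← mul_sum] at hsum
  unfold overlapMoment
  linarith

lemma two_pow_div_factorial_succ (k : ℕ) :
    (2 : ℝ) ^ (k + 1) / (k + 1).factorial = 2 * (2 ^ k / k.factorial) / (k + 1) := by
  rw [Nat.factorial_succ]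
  push_cast
  field_simp
  ring

theorem overlapMoment_le [Nonempty V] (k : ℕ) : overlapMoment V k ≤ 2 ^ k / k.factorial := by
  induction k with
  | zero => simp [overlapMoment_zero]
  | succ k ih =>
    rw [two_pow_div_factorial_succ, le_div_iff₀ (by positivity), mul_comm]
    linarith [overlapMoment_succ_le (V := V) k]

theorem tendsto_overlapMoment (k : ℕ) :
    Tendsto (fun n ↦ overlapMoment (Fin n) k) atTop (𝓝 (2 ^ k / k.factorial)) := by
  induction k with
  | zero =>
    refine tendsto_const_nhds.congr' ?_
    filter_upwards [eventually_gt_atTop 0] with n hn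
    have := Fin.pos_iff_nonempty.1 hn
    simp [overlapMoment_zero]
  | succ k ih =>
    rw [two_pow_div_factorial_succ]
    have hlower : Tendsto (fun n : ℕ ↦ 2 * (1 - (4 * (k : ℝ) + 1) / n) *
        overlapMoment (Fin n) k / (k + 1)) atTop (𝓝 (2 * (2 ^ k / k.factorial) / (k + 1))) := by
      simpa using (((tendsto_const_div_atTop_nhds_zero_nat _).const_sub 1).const_mul 2
        |>.mul ih).div_const ((k : ℝ) + 1)
    refine tendsto_of_tendsto_of_tendsto_of_le_of_le' hlower
      ((ih.const_mul 2).div_const ((k : ℝ) + 1)) ?_ ?_ <;>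
      filter_upwards [eventually_gt_atTop 0] with n hn <;>
      have := Fin.pos_iff_nonempty.1 hn
    · rw [div_le_iff₀ (by positivity), mul_comm _ ((k : ℝ) + 1)]
      simpa using le_overlapMoment_succ (V := Fin n) k
    · rw [le_div_iff₀ (by positivity), mul_comm]
      exact overlapMoment_succ_le k

end Moments

section Counting

variable {V : Type*}

lemma edgeSet_fromEdgeSet_of_subset {G : SimpleGraph V} {s : Set (Sym2 V)} (h : s ⊆ G.edgeSet) :
    (fromEdgeSet s).edgeSet = s := by
  rw [edgeSet_fromEdgeSet, sdiff_eq_left, Set.disjoint_left]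
  exact fun e he ↦ not_isDiag_of_mem_edgeSet _ (h he)

section Finite

variable [Finite V]

lemma ncard_edgeSet_mono {G H : SimpleGraph V} (h : G ≤ H) : G.edgeSet.ncard ≤ H.edgeSet.ncard :=
  Set.ncard_le_ncard (edgeSet_mono h)

lemma ncard_edgeSet_sup_add_inf (G H : SimpleGraph V) :
    (G ⊔ H).edgeSet.ncard + (G ⊓ H).edgeSet.ncard = G.edgeSet.ncard + H.edgeSet.ncard := by
  rw [edgeSet_sup, edgeSet_inf, Set.ncard_union_add_ncard_inter]

end Finite

variable [Fintype V]

lemma ncard_edgeSet_top : (⊤ : SimpleGraph V).edgeSet.ncard = (Fintype.card V).choose 2 := by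
  rw [← card_edgeFinset_top_eq_card_choose_two, ← coe_edgeFinset, Set.ncard_coe_finset]

lemma card_graphs_between {A B : SimpleGraph V} {M : ℕ} (hAB : A ≤ B)
    (hM : A.edgeSet.ncard ≤ M) :
    #{G ∈ graphsWithEdges V M | A ≤ G ∧ G ≤ B} =
      (B.edgeSet.ncard - A.edgeSet.ncard).choose (M - A.edgeSet.ncard) := by
  rw [← Set.ncard_sdiff (edgeSet_mono hAB), Set.ncard_eq_toFinset_card', ← card_powersetCard]
  have hsub {s : Finset (Sym2 V)} (hs : s ⊆ (B.edgeSet \ A.edgeSet).toFinset) :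
      (s : Set (Sym2 V)) ⊆ (B \ A).edgeSet := by
    rwa [edgeSet_sdiff, ← Set.subset_toFinset]
  have hdisj {s : Finset (Sym2 V)} (hs : s ⊆ (B.edgeSet \ A.edgeSet).toFinset) :
      Disjoint A (fromEdgeSet (s : Set (Sym2 V))) :=
    disjoint_sdiff_self_right.mono_right <| by
      rw [← edgeSet_subset_edgeSet, edgeSet_fromEdgeSet_of_subset (hsub hs)]
      exact hsub hs
  refine card_bij' (fun G _ ↦ (G.edgeSet \ A.edgeSet).toFinset)
    (fun s _ ↦ A ⊔ fromEdgeSet (s : Set (Sym2 V))) ?_ ?_ ?_ ?_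
  · intro G hG
    obtain ⟨hG, hAG, hGB⟩ := by simpa only [mem_filter, mem_graphsWithEdges] using hG
    rw [mem_powersetCard, Set.toFinset_subset_toFinset, ← Set.ncard_eq_toFinset_card',
      Set.ncard_sdiff (edgeSet_mono hAG), hG]
    exact ⟨Set.sdiff_subset_sdiff_left (edgeSet_mono hGB), rfl⟩
  · intro s hs
    obtain ⟨hs, hcard⟩ := mem_powersetCard.1 hs
    have hle : fromEdgeSet (s : Set (Sym2 V)) ≤ B := by
      rw [← edgeSet_subset_edgeSet, edgeSet_fromEdgeSet_of_subset (hsub hs)]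
      exact (hsub hs).trans (edgeSet_mono sdiff_le)
    have hsum := ncard_edgeSet_sup_add_inf A (fromEdgeSet (s : Set (Sym2 V)))
    rw [(hdisj hs).eq_bot, edgeSet_bot, Set.ncard_empty,
      edgeSet_fromEdgeSet_of_subset (hsub hs), Set.ncard_coe_finset] at hsum
    rw [mem_filter, mem_graphsWithEdges]
    exact ⟨by omega, le_sup_left, sup_le hAB hle⟩
  · intro G hG
    obtain ⟨-, hAG, -⟩ := by simpa only [mem_filter] using hG
    rw [Set.coe_toFinset, ← edgeSet_sdiff, fromEdgeSet_edgeSet, sup_sdiff_cancel_right hAG]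
  · intro s hs
    obtain ⟨hs, -⟩ := mem_powersetCard.1 hs
    rw [← coe_inj, Set.coe_toFinset, ← edgeSet_sdiff, (hdisj hs).sup_sdiff_cancel_left,
      edgeSet_fromEdgeSet_of_subset (hsub hs)]

lemma card_subgraphs_with_edges (G : SimpleGraph V) (k : ℕ) :
    #{F ∈ graphsWithEdges V k | F ≤ G} = G.edgeSet.ncard.choose k := by
  simpa using card_graphs_between (M := k) (bot_le : ⊥ ≤ G) (by simp)

lemma card_supergraphs_with_edges {H : SimpleGraph V} {M : ℕ} (hM : H.edgeSet.ncard ≤ M) :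
    #{G ∈ graphsWithEdges V M | H ≤ G} =
      ((Fintype.card V).choose 2 - H.edgeSet.ncard).choose (M - H.edgeSet.ncard) := by
  simpa only [le_top, and_true, ncard_edgeSet_top] using card_graphs_between le_top hM

lemma card_graphsWithEdges (M : ℕ) :
    #(graphsWithEdges V M) = ((Fintype.card V).choose 2).choose M := by
  simpa using card_supergraphs_with_edges (H := (⊥ : SimpleGraph V)) (M := M) (by simp)

end Counting

section Overlap

variable {V : Type*} [Fintype V]

/-- The number of common edges of two graphs. -/
noncomputable def commonEdges (q : SimpleGraph V × SimpleGraph V) : ℕ := (q.1 ⊓ q.2).edgeSet.ncard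

variable (V) in
/-- The ordered pairs of spanning trees of the complete graph. -/
noncomputable def treePairs : Finset (SimpleGraph V × SimpleGraph V) :=
  spanningTrees V ×ˢ spanningTrees V

lemma expect_boole_eq_card_div {α : Type*} (s : Finset α) (P : α → Prop) [DecidablePred P] :
    𝔼 a ∈ s, (if P a then 1 else 0 : ℝ) = #{a ∈ s | P a} / #s := by
  rw [expect_eq_sum_div_card, sum_boole]

theorem expect_choose_commonEdges (k : ℕ) :
    𝔼 q ∈ treePairs V, ((commonEdges q).choose k : ℝ) = overlapMoment V k := by
  calc 𝔼 q ∈ treePairs V, ((commonEdges q).choose k : ℝ)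
      = 𝔼 q ∈ treePairs V, ∑ F ∈ graphsWithEdges V k,
          (if F ≤ q.1 then 1 else 0) * (if F ≤ q.2 then 1 else 0) :=
        expect_congr rfl fun q _ ↦ by
          rw [commonEdges, ← card_subgraphs_with_edges, card_filter]
          push_cast
          exact sum_congr rfl fun F _ ↦ by simp only [le_inf_iff, ite_zero_mul_ite_zero, one_mul]
    _ = ∑ F ∈ graphsWithEdges V k, (𝔼 T ∈ spanningTrees V, if F ≤ T then 1 else 0) ^ 2 := by
        rw [expect_sum_comm]
        exact sum_congr rfl fun F _ ↦ by
          rw [sq, expect_mul_expect, treePairs, expect_product]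
    _ = overlapMoment V k := sum_congr rfl fun F _ ↦ by
        rw [expect_boole_eq_card_div, inclusionProb, treesContaining]

end Overlap

section PoissonLimit

lemma hasSum_alternating_choose_mul_iff {f : ℕ → ℝ} {m : ℕ} {a : ℝ} :
    HasSum (fun k ↦ (-1) ^ (k + m) * k.choose m * f k) a ↔
      HasSum (fun j ↦ (-1) ^ j * ((j + m).choose m * f (j + m))) a := by
  rw [← (add_left_injective m).hasSum_iff]
  · refine iff_of_eq (congrArg (HasSum · a) (funext fun j ↦ ?_))
    rw [Function.comp_apply, add_assoc, pow_add, (Even.add_self m).neg_one_pow, mul_one, mul_assoc]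
  · intro k hk
    have : k < m := by
      by_contra! h
      exact hk ⟨k - m, Nat.sub_add_cancel h⟩
    simp [Nat.choose_eq_zero_of_lt this]

lemma hasSum_alternating_choose (n : ℕ) :
    HasSum (fun j ↦ (-1 : ℝ) ^ j * n.choose j) (if n = 0 then 1 else 0) := by
  have hsum : ∑ j ∈ range (n + 1), (-1 : ℝ) ^ j * n.choose j = if n = 0 then 1 else 0 := by
    exact_mod_cast Int.alternating_sum_range_choose (n := n)
  rw [← hsum]
  refine hasSum_sum_of_ne_finset_zero fun j hj ↦ ?_
  simp [Nat.choose_eq_zero_of_lt (by simpa [Nat.lt_succ_iff] using hj : n < j)]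

theorem hasSum_alternating_choose_mul_choose (x m : ℕ) :
    HasSum (fun k ↦ (-1 : ℝ) ^ (k + m) * k.choose m * x.choose k) (if x = m then 1 else 0) := by
  rw [hasSum_alternating_choose_mul_iff]
  convert! (hasSum_alternating_choose (x - m)).mul_left (x.choose m : ℝ) using 1
  · ext j
    have : (x.choose (j + m) : ℝ) * (j + m).choose m = x.choose m * (x - m).choose j := by
      exact_mod_cast (Nat.choose_mul (Nat.le_add_left m j)).trans (by rw [Nat.add_sub_cancel])
    linear_combination (-1 : ℝ) ^ j * this
  · rcases lt_trichotomy x m with h | rfl | h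
    · simp [h.ne, Nat.choose_eq_zero_of_lt h]
    · simp
    · simp [h.ne', (Nat.sub_pos_of_lt h).ne']

theorem hasSum_alternating_choose_mul_pow_div_factorial (c : ℝ) (m : ℕ) :
    HasSum (fun k ↦ (-1 : ℝ) ^ (k + m) * k.choose m * (c ^ k / k.factorial))
      (Real.exp (-c) * (c ^ m / m.factorial)) := by
  rw [hasSum_alternating_choose_mul_iff, Real.exp_eq_exp_ℝ]
  convert! (NormedSpace.expSeries_div_hasSum_exp (-c)).mul_right (c ^ m / m.factorial) using 1
  ext j
  have : ((j + m).choose m : ℝ) * j.factorial * m.factorial = (j + m).factorial := by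
    exact_mod_cast Nat.add_choose_mul_factorial_mul_factorial j m
  rw [← this, neg_pow c, pow_add]
  have : ((j + m).choose m : ℝ) ≠ 0 := by exact_mod_cast (Nat.choose_pos (by omega)).ne'
  field_simp

lemma hasSum_expect {α β : Type*} {s : Finset α} {f : α → β → ℝ} {g : α → ℝ}
    (h : ∀ a ∈ s, HasSum (f a) (g a)) :
    HasSum (fun b ↦ 𝔼 a ∈ s, f a b) (𝔼 a ∈ s, g a) := by
  simpa only [expect_eq_sum_div_card] using (hasSum_sum h).div_const _

variable {ι : Type*} {l : Filter ι} {Ω : ι → Type*} {s : ∀ i, Finset (Ω i)} {X : ∀ i, Ω i → ℕ}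
  {c : ℝ}

theorem tendsto_expect_boole_eq
    (hlim : ∀ k, Tendsto (fun i ↦ 𝔼 a ∈ s i, ((X i a).choose k : ℝ)) l (𝓝 (c ^ k / k.factorial)))
    (hle : ∀ᶠ i in l, ∀ k, 𝔼 a ∈ s i, ((X i a).choose k : ℝ) ≤ c ^ k / k.factorial) (m : ℕ) :
    Tendsto (fun i ↦ 𝔼 a ∈ s i, (if X i a = m then 1 else 0 : ℝ)) l
      (𝓝 (Real.exp (-c) * (c ^ m / m.factorial))) := by
  have hinv (i) : HasSum (fun k ↦ 𝔼 a ∈ s i, (-1 : ℝ) ^ (k + m) * k.choose m * (X i a).choose k)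
      (𝔼 a ∈ s i, (if X i a = m then 1 else 0 : ℝ)) :=
    hasSum_expect fun a _ ↦ hasSum_alternating_choose_mul_choose (X i a) m
  simp only [← mul_expect] at hinv
  rw [← (hasSum_alternating_choose_mul_pow_div_factorial c m).tsum_eq]
  simp only [← (hinv _).tsum_eq]
  refine tendsto_tsum_of_dominated_convergence (Real.summable_pow_div_factorial (2 * c))
    (fun k ↦ (hlim k).const_mul _) ?_
  filter_upwards [hle] with i hi k
  have hchoose : (k.choose m : ℝ) ≤ 2 ^ k := by exact_mod_cast Nat.choose_le_two_pow k m
  have hnonneg : 0 ≤ 𝔼 a ∈ s i, ((X i a).choose k : ℝ) := expect_nonneg fun _ _ ↦ by positivity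
  rw [norm_mul, norm_mul, norm_pow, norm_neg, norm_one, one_pow, one_mul, Real.norm_natCast,
    Real.norm_of_nonneg hnonneg, mul_pow, mul_div_assoc]
  exact mul_le_mul hchoose (hi k) hnonneg (by positivity)

theorem tendsto_expect_comp {φ : ι → ℕ → ℝ} {ψ : ℕ → ℝ} {C K b : ℝ}
    (hlim : ∀ k, Tendsto (fun i ↦ 𝔼 a ∈ s i, ((X i a).choose k : ℝ)) l (𝓝 (c ^ k / k.factorial)))
    (hle : ∀ᶠ i in l, ∀ k, 𝔼 a ∈ s i, ((X i a).choose k : ℝ) ≤ c ^ k / k.factorial)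
    (hφ : ∀ j, Tendsto (φ · j) l (𝓝 (ψ j))) (hbound : ∀ᶠ i in l, ∀ j, |φ i j| ≤ C * K ^ j)
    (hsum : HasSum (fun j ↦ Real.exp (-c) * (c ^ j / j.factorial) * ψ j) b) :
    Tendsto (fun i ↦ 𝔼 a ∈ s i, φ i (X i a)) l (𝓝 b) := by
  have hfiber (i) : HasSum (fun j ↦ 𝔼 a ∈ s i, (if X i a = j then 1 else 0) * φ i j)
      (𝔼 a ∈ s i, φ i (X i a)) :=
    hasSum_expect fun a _ ↦ by
      have := hasSum_single (f := fun j ↦ (if X i a = j then 1 else 0) * φ i j) (X i a)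
        fun j hj ↦ by simp [hj.symm]
      simpa only [if_true, one_mul] using this
  simp only [← expect_mul] at hfiber
  rw [← hsum.tsum_eq]
  simp only [← (hfiber _).tsum_eq]
  refine tendsto_tsum_of_dominated_convergence
    ((Real.summable_pow_div_factorial (c * K)).mul_left C)
    (fun j ↦ (tendsto_expect_boole_eq hlim hle j).mul (hφ j)) ?_
  filter_upwards [hle, hbound] with i hi hb j
  have hprob : 𝔼 a ∈ s i, (if X i a = j then 1 else 0 : ℝ) ≤ c ^ j / j.factorial :=
    (expect_le_expect fun a _ ↦ by split_ifs with h <;> simp [h]).trans (hi j)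
  have hnonneg : 0 ≤ 𝔼 a ∈ s i, (if X i a = j then 1 else 0 : ℝ) :=
    expect_nonneg fun a _ ↦ by positivity
  rw [norm_mul, Real.norm_of_nonneg hnonneg, Real.norm_eq_abs]
  calc _ ≤ c ^ j / j.factorial * (C * K ^ j) :=
        mul_le_mul hprob (hb j) (abs_nonneg _) (hnonneg.trans hprob)
    _ = _ := by ring

end PoissonLimit

section UniformModel

variable {V : Type*} [Fintype V]

/-- The probability that a uniformly random `M`-element subset of an `N`-element set contains
`j` given elements. -/
noncomputable def containmentProb (N M j : ℕ) : ℝ := M.descFactorial j / N.descFactorial j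

lemma choose_sub_div_choose {N M : ℕ} (hM : M ≤ N) {j : ℕ} (hj : j ≤ M) :
    ((N - j).choose (M - j) : ℝ) / N.choose M = containmentProb N M j := by
  have hmul : (N.choose M : ℝ) * M.choose j = N.choose j * (N - j).choose (M - j) := by
    exact_mod_cast Nat.choose_mul hj
  have hNM : (N.choose M : ℝ) ≠ 0 := by exact_mod_cast (Nat.choose_pos hM).ne'
  have hNj : (N.choose j : ℝ) ≠ 0 := by exact_mod_cast (Nat.choose_pos (hj.trans hM)).ne'
  rw [containmentProb, Nat.descFactorial_eq_factorial_mul_choose,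
    Nat.descFactorial_eq_factorial_mul_choose, Nat.cast_mul, Nat.cast_mul,
    mul_div_mul_left _ _ (by exact_mod_cast j.factorial_ne_zero), div_eq_div_iff hNM hNj]
  linear_combination -hmul

theorem expect_le_eq_containmentProb {M : ℕ} (hM : M ≤ (Fintype.card V).choose 2)
    (H : SimpleGraph V) :
    𝔼 G ∈ graphsWithEdges V M, (if H ≤ G then 1 else 0 : ℝ) =
      containmentProb ((Fintype.card V).choose 2) M H.edgeSet.ncard := by
  rw [expect_boole_eq_card_div]
  rcases le_or_gt H.edgeSet.ncard M with h | h
  · rw [card_supergraphs_with_edges h, card_graphsWithEdges, choose_sub_div_choose hM h]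
  · have hnone : {G ∈ graphsWithEdges V M | H ≤ G} = ∅ := by
      refine filter_eq_empty_iff.2 fun G hG hHG ↦ h.not_ge ?_
      exact mem_graphsWithEdges.1 hG ▸ ncard_edgeSet_mono hHG
    rw [hnone, containmentProb, Nat.descFactorial_of_lt h]
    simp

/-- For two spanning trees of the complete graph on `n` vertices with `j` common edges: the
probability that a uniformly random graph with `M` edges contains both of them, relative to the
square of the probability that it contains one of them. -/
noncomputable def overlapDensity (n M j : ℕ) : ℝ :=
  containmentProb (n.choose 2) M (2 * (n - 1) - j) / containmentProb (n.choose 2) M (n - 1) ^ 2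

/-- The proportion of the spanning trees of the complete graph that are contained in `G`. -/
noncomputable def treeDensity (G : SimpleGraph V) : ℝ :=
  𝔼 T ∈ spanningTrees V, if T ≤ G then 1 else 0

/-- The probability that two independent uniformly random spanning trees of `G` have exactly `m`
common edges; a disconnected graph counts as having no common edges. -/
noncomputable def commonEdgesProb (G : SimpleGraph V) (m : ℕ) : ℝ :=
  if G.Connected then
    (#{q ∈ treePairs V | (q.1 ≤ G ∧ q.2 ≤ G) ∧ commonEdges q = m} : ℝ) /
      (#{T ∈ spanningTrees V | T ≤ G} : ℝ) ^ 2
  else if m = 0 then 1 else 0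

lemma ncard_edgeSet_of_mem_spanningTrees {T : SimpleGraph V} (hT : T ∈ spanningTrees V) :
    T.edgeSet.ncard = Fintype.card V - 1 := by
  have := ncard_edgeSet_add_one_of_isTree (mem_spanningTrees.1 hT)
  omega

lemma ncard_edgeSet_sup_of_mem_treePairs {q : SimpleGraph V × SimpleGraph V}
    (hq : q ∈ treePairs V) :
    (q.1 ⊔ q.2).edgeSet.ncard = 2 * (Fintype.card V - 1) - commonEdges q := by
  obtain ⟨h₁, h₂⟩ := mem_product.1 hq
  have := ncard_edgeSet_sup_add_inf q.1 q.2
  rw [ncard_edgeSet_of_mem_spanningTrees h₁, ncard_edgeSet_of_mem_spanningTrees h₂] at this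
  rw [commonEdges]
  omega

lemma treeDensity_sq (G : SimpleGraph V) :
    treeDensity G ^ 2 = 𝔼 q ∈ treePairs V, if q.1 ≤ G ∧ q.2 ≤ G then 1 else 0 := by
  rw [treeDensity, sq, expect_mul_expect, treePairs, expect_product]
  simp only [ite_zero_mul_ite_zero, one_mul]

lemma card_trees_le_pos {G : SimpleGraph V} (hG : G.Connected) :
    0 < #{T ∈ spanningTrees V | T ≤ G} := by
  obtain ⟨T, hTG, hT⟩ := hG.exists_isTree_le
  exact card_pos.2 ⟨T, mem_filter.2 ⟨mem_spanningTrees.2 hT, hTG⟩⟩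

lemma commonEdgesProb_mem_Icc (G : SimpleGraph V) (m : ℕ) :
    commonEdgesProb G m ∈ Set.Icc 0 1 := by
  unfold commonEdgesProb
  split_ifs with hG
  · have hcard : #{q ∈ treePairs V | (q.1 ≤ G ∧ q.2 ≤ G) ∧ commonEdges q = m} ≤
        #{T ∈ spanningTrees V | T ≤ G} ^ 2 := by
      rw [sq, ← card_product]
      refine card_le_card fun q hq ↦ ?_
      simp only [treePairs, mem_filter, mem_product] at hq ⊢
      tauto
    exact ⟨by positivity, div_le_one_of_le₀ (by exact_mod_cast hcard) (by positivity)⟩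
  · simp
  · simp

lemma commonEdgesProb_mul_treeDensity_sq (G : SimpleGraph V) (m : ℕ) :
    commonEdgesProb G m * treeDensity G ^ 2 = 𝔼 q ∈ treePairs V,
      (if commonEdges q = m then 1 else 0) * if q.1 ≤ G ∧ q.2 ≤ G then 1 else 0 := by
  by_cases hG : G.Connected
  · have hpos : (#{T ∈ spanningTrees V | T ≤ G} : ℝ) ≠ 0 := by
      exact_mod_cast (card_trees_le_pos hG).ne'
    simp only [mul_comm, ite_zero_mul_ite_zero, one_mul]
    have hcard : (#(treePairs V) : ℝ) = #(spanningTrees V) ^ 2 := by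
      rw [treePairs, card_product, Nat.cast_mul, sq]
    rw [commonEdgesProb, if_pos hG, treeDensity, expect_boole_eq_card_div,
      expect_boole_eq_card_div, hcard]
    field_simp
  · have hnot {T : SimpleGraph V} (hT : T ∈ spanningTrees V) : ¬ T ≤ G :=
      fun h ↦ hG ((mem_spanningTrees.1 hT).connected.mono h)
    have hdens : treeDensity G = 0 := expect_eq_zero fun T hT ↦ if_neg (hnot hT)
    rw [hdens, expect_eq_zero fun q hq ↦ by simp [hnot (mem_product.1 hq).1]]
    ring

lemma sq_expect_sub_expect_mul_sq_le {α : Type*} {s : Finset α} {r X : α → ℝ}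
    (hr : ∀ a ∈ s, r a ∈ Set.Icc 0 1) (hX : 𝔼 a ∈ s, X a = 1) :
    (𝔼 a ∈ s, r a - 𝔼 a ∈ s, r a * X a ^ 2) ^ 2 ≤
      (𝔼 a ∈ s, X a ^ 2 - 1) * (𝔼 a ∈ s, X a ^ 2 + 3) := by
  have hs : s.Nonempty := by
    rw [nonempty_iff_ne_empty]
    rintro rfl
    simp at hX
  have hvar (c : ℝ) : 𝔼 a ∈ s, (X a + c) ^ 2 = 𝔼 a ∈ s, X a ^ 2 + 2 * c + c ^ 2 := by
    simp only [add_sq, expect_add_distrib, ← mul_expect, ← expect_mul, expect_const hs, hX]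
    ring
  calc (𝔼 a ∈ s, r a - 𝔼 a ∈ s, r a * X a ^ 2) ^ 2
      = (𝔼 a ∈ s, r a * (X a + -1) * (X a + 1)) ^ 2 := by
        rw [← expect_sub_distrib, ← neg_sq, ← expect_neg_distrib]
        exact congrArg (· ^ 2) (expect_congr rfl fun a _ ↦ by ring)
    _ ≤ (𝔼 a ∈ s, (r a * (X a + -1)) ^ 2) * 𝔼 a ∈ s, (X a + 1) ^ 2 :=
        expect_mul_sq_le_sq_mul_sq s _ _
    _ ≤ (𝔼 a ∈ s, (X a + -1) ^ 2) * 𝔼 a ∈ s, (X a + 1) ^ 2 := by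
        refine mul_le_mul_of_nonneg_right (expect_le_expect fun a ha ↦ ?_)
          (expect_nonneg fun a _ ↦ sq_nonneg _)
        rw [mul_pow]
        exact mul_le_of_le_one_left (sq_nonneg _) (pow_le_one₀ (hr a ha).1 (hr a ha).2)
    _ = _ := by
        rw [hvar, hvar]
        ring

variable {M : ℕ}

lemma expect_treeDensity [Nonempty V] (hM : M ≤ (Fintype.card V).choose 2) :
    𝔼 G ∈ graphsWithEdges V M, treeDensity G =
      containmentProb ((Fintype.card V).choose 2) M (Fintype.card V - 1) := by
  unfold treeDensity
  rw [expect_comm, expect_congr rfl fun T hT ↦ by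
    rw [expect_le_eq_containmentProb hM, ncard_edgeSet_of_mem_spanningTrees hT]]
  exact expect_const spanningTrees_nonempty _

lemma expect_expect_treePairs_le (hM : M ≤ (Fintype.card V).choose 2) (f : ℕ → ℝ) :
    𝔼 G ∈ graphsWithEdges V M, 𝔼 q ∈ treePairs V,
        f (commonEdges q) * (if q.1 ≤ G ∧ q.2 ≤ G then 1 else 0) =
      𝔼 q ∈ treePairs V, f (commonEdges q) *
        containmentProb ((Fintype.card V).choose 2) M
          (2 * (Fintype.card V - 1) - commonEdges q) := by
  rw [expect_comm]
  refine expect_congr rfl fun q hq ↦ ?_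
  simp only [← mul_expect, ← sup_le_iff]
  rw [expect_le_eq_containmentProb hM, ncard_edgeSet_sup_of_mem_treePairs hq]

theorem sq_expect_commonEdgesProb_sub_le [Nonempty V] (hM : M ≤ (Fintype.card V).choose 2)
    (hVM : Fintype.card V - 1 ≤ M) (m : ℕ) :
    (𝔼 G ∈ graphsWithEdges V M, commonEdgesProb G m - 𝔼 q ∈ treePairs V,
        (if commonEdges q = m then 1 else 0) *
          overlapDensity (Fintype.card V) M (commonEdges q)) ^ 2 ≤
      (𝔼 q ∈ treePairs V, overlapDensity (Fintype.card V) M (commonEdges q) - 1) *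
        (𝔼 q ∈ treePairs V, overlapDensity (Fintype.card V) M (commonEdges q) + 3) := by
  set a := containmentProb ((Fintype.card V).choose 2) M (Fintype.card V - 1) with ha
  have ha0 : a ≠ 0 := by
    have h₁ : M.descFactorial (Fintype.card V - 1) ≠ 0 :=
      mt Nat.descFactorial_eq_zero_iff_lt.1 hVM.not_gt
    have h₂ : ((Fintype.card V).choose 2).descFactorial (Fintype.card V - 1) ≠ 0 :=
      mt Nat.descFactorial_eq_zero_iff_lt.1 (hVM.trans hM).not_gt
    rw [ha, containmentProb]
    positivity
  have hmean : 𝔼 G ∈ graphsWithEdges V M, treeDensity G / a = 1 := by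
    rw [← expect_div, expect_treeDensity hM, div_self ha0]
  have hsq : 𝔼 G ∈ graphsWithEdges V M, (treeDensity G / a) ^ 2 =
      𝔼 q ∈ treePairs V, overlapDensity (Fintype.card V) M (commonEdges q) := by
    have := expect_expect_treePairs_le hM (fun _ ↦ 1)
    simp only [one_mul] at this
    simp only [div_pow, ← expect_div, treeDensity_sq, this, overlapDensity, ← ha]
  have hlaw : 𝔼 G ∈ graphsWithEdges V M, commonEdgesProb G m * (treeDensity G / a) ^ 2 =
      𝔼 q ∈ treePairs V, (if commonEdges q = m then 1 else 0) *
        overlapDensity (Fintype.card V) M (commonEdges q) := by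
    have := expect_expect_treePairs_le hM (fun j ↦ if j = m then 1 else 0)
    simp only [div_pow, ← mul_div_assoc, commonEdgesProb_mul_treeDensity_sq, ← expect_div, this,
      overlapDensity, ← ha]
  rw [← hlaw, ← hsq]
  exact sq_expect_sub_expect_mul_sq_le (fun G _ ↦ commonEdgesProb_mem_Icc G m) hmean
end UniformModel

section Density

lemma descFactorial_sub_div_eq_prod {L x : ℕ} (h : 2 * x < L) :
    ((L - x).descFactorial x : ℝ) / L.descFactorial x =
      ∏ i ∈ range x, ((L - x - i) / (L - i) : ℝ) := by
  rw [Nat.descFactorial_eq_prod_range, Nat.descFactorial_eq_prod_range, Nat.cast_prod,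
    Nat.cast_prod, ← prod_div_distrib]
  refine prod_congr rfl fun i hi ↦ ?_
  have := mem_range.1 hi
  rw [Nat.cast_sub (by omega), Nat.cast_sub (by omega), Nat.cast_sub (by omega)]

lemma descFactorial_sub_div_le_exp {L x : ℕ} (h : 2 * x < L) :
    ((L - x).descFactorial x : ℝ) / L.descFactorial x ≤ Real.exp (-(x ^ 2 / L)) := by
  have hL : (2 * x : ℝ) < L := by exact_mod_cast h
  have hexp : Real.exp (-(x ^ 2 / L)) = ∏ _i ∈ range x, Real.exp (-(x / L)) := by
    rw [prod_const, card_range, ← Real.exp_nat_mul]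
    ring_nf
  rw [descFactorial_sub_div_eq_prod h, hexp]
  refine prod_le_prod (fun i hi ↦ ?_) fun i hi ↦ ?_ <;>
    have hi : (i : ℝ) < x := by exact_mod_cast mem_range.1 hi
  · exact div_nonneg (by linarith) (by linarith)
  · have hpos : (0 : ℝ) < L - i := by linarith
    calc ((L - x - i) / (L - i) : ℝ) = 1 - x / (L - i) := by field_simp; ring
      _ ≤ 1 - x / L := by gcongr; linarith [i.cast_nonneg (α := ℝ)]
      _ ≤ Real.exp (-(x / L)) := Real.one_sub_le_exp_neg _

lemma exp_le_descFactorial_sub_div {L x : ℕ} (h : 2 * x < L) :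
    Real.exp (-(x ^ 2 / (L - 2 * x))) ≤ ((L - x).descFactorial x : ℝ) / L.descFactorial x := by
  have hL : (0 : ℝ) < L - 2 * x := sub_pos.2 (by exact_mod_cast h)
  have hexp : Real.exp (-(x ^ 2 / (L - 2 * x))) =
      ∏ _i ∈ range x, (Real.exp (x / (L - 2 * x)))⁻¹ := by
    rw [prod_const, card_range, ← Real.exp_neg, ← Real.exp_nat_mul]
    ring_nf
  rw [descFactorial_sub_div_eq_prod h, hexp]
  refine prod_le_prod (fun i _ ↦ by positivity) fun i hi ↦ ?_
  have hi : (i : ℝ) < x := by exact_mod_cast mem_range.1 hi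
  have hpos : (0 : ℝ) < L - x - i := by linarith
  rw [← inv_div (L - i : ℝ)]
  refine inv_anti₀ (div_pos (by linarith) hpos) ?_
  calc ((L - i) / (L - x - i) : ℝ) = x / (L - x - i) + 1 := by field_simp; ring
    _ ≤ x / (L - 2 * x) + 1 := by
        have hle : (L - 2 * x : ℝ) ≤ L - x - i := by linarith
        linarith [div_le_div_of_nonneg_left (x.cast_nonneg (α := ℝ)) hL hle]
    _ ≤ Real.exp (x / (L - 2 * x)) := Real.add_one_le_exp _

lemma containmentProb_nonneg (N M j : ℕ) : 0 ≤ containmentProb N M j := by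
  unfold containmentProb
  positivity

lemma overlapDensity_nonneg (n M j : ℕ) : 0 ≤ overlapDensity n M j :=
  div_nonneg (containmentProb_nonneg _ _ _) (sq_nonneg _)

lemma containmentProb_two_mul_div_sq {N M x : ℕ} (hx : x ≤ M) (hM : M ≤ N) :
    containmentProb N M (2 * x) / containmentProb N M x ^ 2 =
      ((M - x).descFactorial x : ℝ) / M.descFactorial x /
        ((N - x).descFactorial x / N.descFactorial x) := by
  have hsplit (L : ℕ) : (L.descFactorial (2 * x) : ℝ) =
      (L - x).descFactorial x * L.descFactorial x := by
    have := Nat.descFactorial_mul_descFactorial (n := L) (show x ≤ 2 * x by omega)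
    rw [show 2 * x - x = x by omega] at this
    exact_mod_cast this.symm
  have hpos {L : ℕ} (h : x ≤ L) : (L.descFactorial x : ℝ) ≠ 0 := by
    exact_mod_cast mt Nat.descFactorial_eq_zero_iff_lt.1 h.not_gt
  have h₁ := hpos hx
  have h₂ := hpos (hx.trans hM)
  simp only [containmentProb, hsplit]
  field_simp

lemma containmentProb_eq_mul_succ {N M k : ℕ} (hk : k < M) (hM : M ≤ N) :
    containmentProb N M k = ((N - k) / (M - k)) * containmentProb N M (k + 1) := by
  have hkM : (M - k : ℝ) ≠ 0 := sub_ne_zero.2 (by exact_mod_cast hk.ne')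
  have hkN : (N - k : ℝ) ≠ 0 := sub_ne_zero.2 (by exact_mod_cast (hk.trans_le hM).ne')
  rw [containmentProb, containmentProb, Nat.descFactorial_succ, Nat.descFactorial_succ]
  push_cast [hk.le, (hk.trans_le hM).le]
  field_simp

section Growth

variable {N M y : ℕ} {K : ℝ} (hyM : y < M) (hM : M ≤ N) (hK : 1 ≤ K) (hN : N ≤ K * (M - y))
include hyM hM hK hN

lemma containmentProb_pred_le {k : ℕ} (hk : k ≤ y) :
    containmentProb N M (k - 1) ≤ containmentProb N M k * K := by
  rcases k with _ | k
  · exact le_mul_of_one_le_right (containmentProb_nonneg _ _ _) hK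
  · have hkM : (0 : ℝ) < M - k := sub_pos.2 (by exact_mod_cast (by omega : k < M))
    have hky : (k : ℝ) ≤ y := by exact_mod_cast (by omega : k ≤ y)
    rw [Nat.add_sub_cancel, containmentProb_eq_mul_succ (by omega) hM, mul_comm]
    refine mul_le_mul_of_nonneg_left ((div_le_iff₀ hkM).2 ?_) (containmentProb_nonneg _ _ _)
    nlinarith [k.cast_nonneg (α := ℝ)]

lemma containmentProb_sub_le (j : ℕ) :
    containmentProb N M (y - j) ≤ containmentProb N M y * K ^ j := by
  induction j with
  | zero => simp
  | succ j ih =>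
    calc containmentProb N M (y - (j + 1))
        ≤ containmentProb N M (y - j) * K := containmentProb_pred_le hyM hM hK hN (y.sub_le j)
      _ ≤ containmentProb N M y * K ^ j * K := by gcongr
      _ = containmentProb N M y * K ^ (j + 1) := by ring

end Growth

variable {ι : Type*} {l : Filter ι} {x L : ι → ℕ} {c : ℝ}

lemma tendsto_div_of_tendsto_sq_div (hx : Tendsto x l atTop)
    (hL : Tendsto (fun i ↦ (x i : ℝ) ^ 2 / L i) l (𝓝 c)) :
    Tendsto (fun i ↦ (x i : ℝ) / L i) l (𝓝 0) := by
  have hlim := hL.mul (tendsto_inv_atTop_zero.comp (tendsto_natCast_atTop_atTop.comp hx))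
  rw [mul_zero] at hlim
  refine hlim.congr' ?_
  filter_upwards [hx.eventually_gt_atTop 0] with i hi
  have : (x i : ℝ) ≠ 0 := by exact_mod_cast hi.ne'
  simp only [Function.comp_apply]
  field_simp

theorem tendsto_descFactorial_sub_div (hx : Tendsto x l atTop) (hlt : ∀ᶠ i in l, 2 * x i < L i)
    (hL : Tendsto (fun i ↦ (x i : ℝ) ^ 2 / L i) l (𝓝 c)) :
    Tendsto (fun i ↦ ((L i - x i).descFactorial (x i) : ℝ) / (L i).descFactorial (x i)) l
      (𝓝 (Real.exp (-c))) := by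
  have hlower : Tendsto (fun i ↦ (x i : ℝ) ^ 2 / (L i - 2 * x i)) l (𝓝 c) := by
    have hlim := hL.div (((tendsto_div_of_tendsto_sq_div hx hL).const_mul 2).const_sub 1)
      (by norm_num)
    rw [mul_zero, sub_zero, div_one] at hlim
    refine hlim.congr' ?_
    filter_upwards [hlt] with i hi
    have : (L i : ℝ) ≠ 0 := by exact_mod_cast (by omega : L i ≠ 0)
    simp only [Pi.div_apply]
    rw [div_div, mul_sub, mul_one]
    field_simp
  refine tendsto_of_tendsto_of_tendsto_of_le_of_le' ((Real.continuous_exp.tendsto _).comp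
    hlower.neg) ((Real.continuous_exp.tendsto _).comp hL.neg) ?_ ?_
  · filter_upwards [hlt] with i hi using exp_le_descFactorial_sub_div hi
  · filter_upwards [hlt] with i hi using descFactorial_sub_div_le_exp hi

lemma tendsto_sq_div_choose_two {n : ι → ℕ} (hn : Tendsto n l atTop) :
    Tendsto (fun i ↦ ((n i - 1 : ℕ) : ℝ) ^ 2 / (n i).choose 2) l (𝓝 2) := by
  have hlim := ((tendsto_inv_atTop_zero.comp (tendsto_natCast_atTop_atTop.comp hn)).const_sub
    1).const_mul (2 : ℝ)
  rw [sub_zero, mul_one] at hlim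
  refine hlim.congr' ?_
  filter_upwards [hn.eventually_gt_atTop 1] with i hi
  have h₀ : (n i : ℝ) ≠ 0 := by exact_mod_cast (by omega : n i ≠ 0)
  have h₁ : (n i - 1 : ℝ) ≠ 0 := sub_ne_zero.2 (by exact_mod_cast hi.ne')
  rw [Nat.cast_choose_two, Nat.cast_sub hi.le, Nat.cast_one, Function.comp_apply,
    Function.comp_apply]
  field_simp

section Limits

variable {n M : ι → ℕ} {p : ℝ} (hn : Tendsto n l atTop) (hle : ∀ᶠ i in l, M i ≤ (n i).choose 2)
  (hp : 0 < p) (hM : Tendsto (fun i ↦ (M i : ℝ) / (n i).choose 2) l (𝓝 p))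

include hn in
lemma tendsto_pred_atTop : Tendsto (fun i ↦ n i - 1) l atTop :=
  (tendsto_sub_atTop_nat 1).comp hn

include hn in
lemma tendsto_two_mul_pred_div_choose_two :
    Tendsto (fun i ↦ ((2 * (n i - 1) : ℕ) : ℝ) / (n i).choose 2) l (𝓝 0) := by
  simpa [mul_div_assoc] using (tendsto_div_of_tendsto_sq_div (tendsto_pred_atTop hn)
    (tendsto_sq_div_choose_two hn)).const_mul 2

include hn hp hM

lemma eventually_two_mul_pred_lt : ∀ᶠ i in l, 2 * (n i - 1) < M i := by
  filter_upwards [(tendsto_two_mul_pred_div_choose_two hn).eventually_lt hM hp] with i hi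
  rw [div_eq_mul_inv, div_eq_mul_inv] at hi
  exact_mod_cast lt_of_mul_lt_mul_right hi (by positivity)

include hle

theorem tendsto_overlapDensity_zero :
    Tendsto (fun i ↦ overlapDensity (n i) (M i) 0) l (𝓝 (Real.exp (2 - 2 / p))) := by
  have hlt := eventually_two_mul_pred_lt hn hp hM
  have hsqM : Tendsto (fun i ↦ ((n i - 1 : ℕ) : ℝ) ^ 2 / M i) l (𝓝 (2 / p)) := by
    refine ((tendsto_sq_div_choose_two hn).div hM hp.ne').congr' ?_
    filter_upwards [hlt, hle] with i hi hi'
    have : ((n i).choose 2 : ℝ) ≠ 0 := by exact_mod_cast (by omega : (n i).choose 2 ≠ 0)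
    simp only [Pi.div_apply]
    field_simp
  have hlim := (tendsto_descFactorial_sub_div (tendsto_pred_atTop hn) hlt hsqM).div
    (tendsto_descFactorial_sub_div (tendsto_pred_atTop hn)
      (hlt.mp (hle.mono fun i h₁ h₂ ↦ h₂.trans_le h₁)) (tendsto_sq_div_choose_two hn))
    (Real.exp_ne_zero _)
  rw [← Real.exp_sub, neg_sub_neg] at hlim
  refine hlim.congr' ?_
  filter_upwards [hlt, hle] with i hi hi'
  rw [overlapDensity, Nat.sub_zero, containmentProb_two_mul_div_sq (by omega) hi', Pi.div_apply]

theorem tendsto_overlapDensity (j : ℕ) :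
    Tendsto (fun i ↦ overlapDensity (n i) (M i) j) l (𝓝 (Real.exp (2 - 2 / p) * p⁻¹ ^ j)) := by
  induction j with
  | zero => simpa using tendsto_overlapDensity_zero hn hle hp hM
  | succ j ih =>
    have hlt := eventually_two_mul_pred_lt hn hp hM
    set k : ι → ℕ := fun i ↦ 2 * (n i - 1) - (j + 1) with hk
    have hk0 : Tendsto (fun i ↦ (k i : ℝ) / (n i).choose 2) l (𝓝 0) :=
      squeeze_zero (fun i ↦ by positivity) (fun i ↦ by gcongr; exact Nat.sub_le _ _)
        (tendsto_two_mul_pred_div_choose_two hn)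
    have hratio : Tendsto (fun i ↦ (((n i).choose 2 - k i) / (M i - k i) : ℝ)) l (𝓝 p⁻¹) := by
      have hlim := (hk0.const_sub 1).div (hM.sub hk0) (by simpa using hp.ne')
      rw [sub_zero, sub_zero, one_div] at hlim
      refine hlim.congr' ?_
      filter_upwards [hlt, hle] with i hi hi'
      have : ((n i).choose 2 : ℝ) ≠ 0 := by exact_mod_cast (by omega : (n i).choose 2 ≠ 0)
      simp only [Pi.div_apply]
      field_simp
    have hlim := hratio.mul ih
    rw [show p⁻¹ * (Real.exp (2 - 2 / p) * p⁻¹ ^ j) = Real.exp (2 - 2 / p) * p⁻¹ ^ (j + 1) by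
      ring] at hlim
    refine hlim.congr' ?_
    filter_upwards [hlt, hle, (tendsto_pred_atTop hn).eventually_gt_atTop j] with i hi hi' hj
    have hki : 2 * (n i - 1) - j = k i + 1 := by simp only [hk]; omega
    rw [overlapDensity, overlapDensity, hki, ← mul_div_assoc]
    rw [← containmentProb_eq_mul_succ (by simp only [hk]; omega) hi']

theorem eventually_overlapDensity_le : ∀ᶠ i in l, ∀ j,
    overlapDensity (n i) (M i) j ≤ (Real.exp (2 - 2 / p) + 1) * (2 / p + 1) ^ j := by
  have hgap : ∀ᶠ i in l, p / 2 < (M i : ℝ) / (n i).choose 2 - (2 * (n i - 1) : ℕ) /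
      (n i).choose 2 :=
    (hM.sub (tendsto_two_mul_pred_div_choose_two hn)).eventually_const_lt (by linarith)
  filter_upwards [eventually_two_mul_pred_lt hn hp hM, hle, hgap,
    (tendsto_overlapDensity_zero hn hle hp hM).eventually_lt_const (lt_add_one _)]
    with i hlt hle hgap hzero j
  have hpos : (0 : ℝ) < (n i).choose 2 := by exact_mod_cast (by omega : 0 < (n i).choose 2)
  have hK : ((n i).choose 2 : ℝ) ≤ (2 / p + 1) * (M i - (2 * (n i - 1) : ℕ)) := by
    have hlt' : ((2 * (n i - 1) : ℕ) : ℝ) < M i := by exact_mod_cast hlt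
    rw [← sub_div, lt_div_iff₀ hpos] at hgap
    calc ((n i).choose 2 : ℝ) = 2 / p * (p / 2 * (n i).choose 2) := by field_simp
      _ ≤ 2 / p * (M i - (2 * (n i - 1) : ℕ)) := by gcongr
      _ ≤ _ := by gcongr; linarith
  have hstep := containmentProb_sub_le hlt hle (le_add_of_nonneg_left (by positivity)) hK j
  calc overlapDensity (n i) (M i) j
      ≤ overlapDensity (n i) (M i) 0 * (2 / p + 1) ^ j := by
        rw [overlapDensity, overlapDensity, Nat.sub_zero, div_mul_eq_mul_div]
        gcongr
    _ ≤ _ := by gcongr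

end Limits
end Density

section FixedEdgesLimit

variable {ι : Type*} {l : Filter ι} {n M : ι → ℕ} {p : ℝ} (hn : Tendsto n l atTop)
  (hle : ∀ᶠ i in l, M i ≤ (n i).choose 2) (hp : 0 < p)
  (hM : Tendsto (fun i ↦ (M i : ℝ) / (n i).choose 2) l (𝓝 p))
include hn hle hp hM

lemma tendsto_expect_mul_overlapDensity {f : ℕ → ℝ} (hf : ∀ j, |f j| ≤ 1) {b : ℝ}
    (hb : HasSum (fun j ↦ f j * (Real.exp (-(2 / p)) * ((2 / p) ^ j / j.factorial))) b) :
    Tendsto (fun i ↦ 𝔼 q ∈ treePairs (Fin (n i)),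
      f (commonEdges q) * overlapDensity (n i) (M i) (commonEdges q)) l (𝓝 b) := by
  refine tendsto_expect_comp (X := fun _ ↦ commonEdges) (c := 2)
    (φ := fun i j ↦ f j * overlapDensity (n i) (M i) j) (C := Real.exp (2 - 2 / p) + 1)
    (K := 2 / p + 1) (fun k ↦ ?_) ?_ (fun j ↦ (tendsto_overlapDensity hn hle hp hM j).const_mul _)
    ?_ ?_
  · simp only [expect_choose_commonEdges]
    exact (tendsto_overlapMoment k).comp hn
  · filter_upwards [hn.eventually_gt_atTop 0] with i hi k
    have : Nonempty (Fin (n i)) := ⟨⟨0, hi⟩⟩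
    rw [expect_choose_commonEdges]
    exact overlapMoment_le k
  · filter_upwards [eventually_overlapDensity_le hn hle hp hM] with i hi j
    rw [abs_mul, abs_of_nonneg (overlapDensity_nonneg _ _ _)]
    exact (mul_le_of_le_one_left (overlapDensity_nonneg _ _ _) (hf j)).trans (hi j)
  · refine hb.congr_fun fun j ↦ ?_
    rw [show Real.exp (-(2 / p)) = Real.exp (-2) * Real.exp (2 - 2 / p) by
      rw [← Real.exp_add]; ring_nf]
    ring

theorem tendsto_expect_commonEdgesProb (m : ℕ) :
    Tendsto (fun i ↦ 𝔼 G ∈ graphsWithEdges (Fin (n i)) (M i), commonEdgesProb G m) l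
      (𝓝 (Real.exp (-(2 / p)) * ((2 / p) ^ m / m.factorial))) := by
  have htotal := tendsto_expect_mul_overlapDensity hn hle hp hM (f := fun _ ↦ 1) (b := 1)
    (fun _ ↦ by simp) (by
      have := (NormedSpace.expSeries_div_hasSum_exp (2 / p)).mul_left (Real.exp (-(2 / p)))
      rw [← Real.exp_eq_exp_ℝ, ← Real.exp_add, neg_add_cancel, Real.exp_zero] at this
      simpa only [one_mul] using this)
  have hlaw := tendsto_expect_mul_overlapDensity hn hle hp hM (f := fun j ↦ if j = m then 1 else 0)
    (fun j ↦ by split_ifs <;> simp) (hasSum_single m fun _ hj ↦ by simp [hj])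
  simp only [one_mul] at htotal
  simp only [if_true, one_mul] at hlaw
  have hbound := (htotal.sub_const 1).mul (htotal.add_const 3)
  rw [sub_self, zero_mul] at hbound
  have hdiff := squeeze_zero' (.of_forall fun i ↦ sq_nonneg _) (by
    filter_upwards [hle, hn.eventually_gt_atTop 0, eventually_two_mul_pred_lt hn hp hM]
      with i hi hpos hlt
    have : Nonempty (Fin (n i)) := ⟨⟨0, hpos⟩⟩
    simpa only [Fintype.card_fin] using sq_expect_commonEdgesProb_sub_le (V := Fin (n i))
      (by simpa using hi) (by simp; omega) m) hbound
  have habs := hdiff.sqrt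
  simp only [Real.sqrt_sq_eq_abs, Real.sqrt_zero] at habs
  simpa using ((tendsto_zero_iff_abs_tendsto_zero _).2 habs).add hlaw

end FixedEdgesLimit

section BinomialMixture

lemma abs_sum_bernstein_mul_sub_le {N : ℕ} (hN : N ≠ 0) (x : unitInterval) {g : ℕ → ℝ}
    {q C δ ε : ℝ} (hδ : 0 < δ) (hε₀ : 0 ≤ ε)
    (hC : ∀ k ≤ N, |g k - q| ≤ C) (hε : ∀ k ≤ N, |(k : ℝ) / N - x| < δ → |g k - q| ≤ ε) :
    |∑ k : Fin (N + 1), bernstein N k x * g k - q| ≤ ε + C / δ ^ 2 * (x * (1 - x) / N) := by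
  have hcenter : ∑ k : Fin (N + 1), bernstein N k x * g k - q =
      ∑ k : Fin (N + 1), bernstein N k x * (g k - q) := by
    simp only [mul_sub, sum_sub_distrib, ← sum_mul, bernstein.probability, one_mul]
  have hpoint (k : Fin (N + 1)) : |g k - q| ≤ ε + C / δ ^ 2 * (x - (k : ℝ) / N) ^ 2 := by
    have hk : (k : ℕ) ≤ N := k.is_le
    have hC0 : 0 ≤ C := (abs_nonneg _).trans (hC k hk)
    rcases lt_or_ge |(k : ℝ) / N - x| δ with h | h
    · exact (hε k hk h).trans (le_add_of_nonneg_right (by positivity))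
    · have hsq : δ ^ 2 ≤ (x - (k : ℝ) / N) ^ 2 := by
        rw [← sq_abs (_ - _), abs_sub_comm]
        gcongr
      calc |g k - q| ≤ C / δ ^ 2 * δ ^ 2 := by
            rw [div_mul_cancel₀ _ (by positivity)]
            exact hC k hk
        _ ≤ C / δ ^ 2 * (x - (k : ℝ) / N) ^ 2 := by gcongr
        _ ≤ _ := le_add_of_nonneg_left hε₀
  calc |∑ k : Fin (N + 1), bernstein N k x * g k - q|
      ≤ ∑ k : Fin (N + 1), bernstein N k x * |g k - q| := by
        rw [hcenter]
        refine (abs_sum_le_sum_abs _ _).trans_eq (sum_congr rfl fun k _ ↦ ?_)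
        rw [abs_mul, abs_of_nonneg bernstein_nonneg]
    _ ≤ ∑ k : Fin (N + 1), bernstein N k x * (ε + C / δ ^ 2 * (x - (k : ℝ) / N) ^ 2) :=
        sum_le_sum fun k _ ↦ mul_le_mul_of_nonneg_left (hpoint k) bernstein_nonneg
    _ = ε + C / δ ^ 2 * (x * (1 - x) / N) := by
        rw [← bernstein.variance hN x, mul_sum]
        simp only [mul_add, sum_add_distrib, ← sum_mul, bernstein.probability, one_mul]
        congr 1
        exact sum_congr rfl fun k _ ↦ by rw [bernstein.z]; ring

variable {ι : Type*} {l : Filter ι} {N : ι → ℕ}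

/-- The filter of pairs `(i, k)` with `k ≤ N i` along which `i` follows `l` and the proportion
`k / N i` tends to `x`: the successful outcomes of `N i` trials of success probability `x`. -/
noncomputable def proportionFilter (l : Filter ι) (N : ι → ℕ) (x : ℝ) : Filter (ι × ℕ) :=
  comap (fun a ↦ (a.1, (a.2 : ℝ) / N a.1)) (l ×ˢ 𝓝 x) ⊓ 𝓟 {a | a.2 ≤ N a.1}

lemma tendsto_proportionFilter (l : Filter ι) (N : ι → ℕ) (x : ℝ) :
    Tendsto (fun a : ι × ℕ ↦ (a.1, (a.2 : ℝ) / N a.1)) (proportionFilter l N x) (l ×ˢ 𝓝 x) :=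
  tendsto_inf_left tendsto_comap

lemma eventually_le_proportionFilter (l : Filter ι) (N : ι → ℕ) (x : ℝ) :
    ∀ᶠ a in proportionFilter l N x, a.2 ≤ N a.1 :=
  eventually_inf_principal.2 (.of_forall fun _ ↦ id)

lemma exists_pos_of_eventually_proportionFilter {x : ℝ} {P : ι × ℕ → Prop}
    (h : ∀ᶠ a in proportionFilter l N x, P a) :
    ∃ δ > 0, ∀ᶠ i in l, ∀ k ≤ N i, |(k : ℝ) / N i - x| < δ → P (i, k) := by
  rw [proportionFilter, eventually_inf_principal, eventually_comap,
    Metric.eventually_prod_nhds_iff] at h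
  obtain ⟨Q, hQ, δ, hδ, hP⟩ := h
  exact ⟨δ, hδ, hQ.mono fun i hi k hk hdist ↦ hP hi hdist (i, k) rfl hk⟩

theorem tendsto_sum_bernstein_mul (hN : Tendsto N l atTop) (x : unitInterval)
    {g : ι → ℕ → ℝ} {q C : ℝ} (hC : ∀ i, ∀ k ≤ N i, |g i k - q| ≤ C)
    (hg : Tendsto (fun a : ι × ℕ ↦ g a.1 a.2) (proportionFilter l N x) (𝓝 q)) :
    Tendsto (fun i ↦ ∑ k : Fin (N i + 1), bernstein (N i) k x * g i k) l (𝓝 q) := by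
  refine Metric.tendsto_nhds.2 fun ε hε ↦ ?_
  obtain ⟨δ, hδ, hclose⟩ := exists_pos_of_eventually_proportionFilter
    (hg.eventually (Metric.closedBall_mem_nhds q (half_pos hε)))
  have hvar : Tendsto (fun i ↦ C / δ ^ 2 * (x * (1 - x) / (N i : ℝ))) l (𝓝 0) := by
    simpa only [mul_zero, Function.comp_apply] using
      (((tendsto_natCast_atTop_atTop (R := ℝ)).comp hN).const_div_atTop _).const_mul _
  filter_upwards [hclose, hN.eventually_ne_atTop 0, hvar.eventually_lt_const (half_pos hε)]
    with i hi hNi hvari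
  rw [Real.dist_eq]
  linarith [abs_sum_bernstein_mul_sub_le hNi x hδ (half_pos hε).le (hC i) hi]

end BinomialMixture

section BinomialModel

lemma tendsto_choose_two_atTop : Tendsto (fun n : ℕ ↦ n.choose 2) atTop atTop :=
  (tendsto_add_atTop_iff_nat 1).1 <| tendsto_atTop_mono (fun n ↦ by
    rw [Nat.choose_succ_succ' n 1, Nat.choose_one_right]
    exact Nat.le_add_right _ _) tendsto_id

lemma abs_expect_commonEdgesProb_sub_le {V : Type*} [Fintype V]
    (s : Finset (SimpleGraph V)) (m : ℕ) (q : ℝ) :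
    |𝔼 G ∈ s, commonEdgesProb G m - q| ≤ 1 + |q| := by
  have hle : |𝔼 G ∈ s, commonEdgesProb G m| ≤ 1 := by
    rw [abs_of_nonneg (expect_nonneg fun G _ ↦ (commonEdgesProb_mem_Icc G m).1),
      expect_eq_sum_div_card]
    exact div_le_one_of_le₀ ((sum_le_card_nsmul s _ 1 fun G _ ↦
      (commonEdgesProb_mem_Icc G m).2).trans_eq (by simp)) (Nat.cast_nonneg _)
  exact (abs_sub _ _).trans (by gcongr)

lemma sum_eq_sum_graphsWithEdges {V : Type*} [Fintype V] [Fintype (SimpleGraph V)]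
    (f : SimpleGraph V → ℝ) :
    ∑ G, f G = ∑ k : Fin ((Fintype.card V).choose 2 + 1), ∑ G ∈ graphsWithEdges V k, f G := by
  have hlt (G : SimpleGraph V) : G.edgeSet.ncard < (Fintype.card V).choose 2 + 1 := by
    rw [Nat.lt_succ_iff, ← ncard_edgeSet_top]
    exact ncard_edgeSet_mono le_top
  rw [← sum_fiberwise univ (fun G : SimpleGraph V ↦
    (⟨G.edgeSet.ncard, hlt G⟩ : Fin ((Fintype.card V).choose 2 + 1)))]
  refine sum_congr rfl fun k _ ↦ sum_congr (Finset.ext fun G ↦ ?_) fun _ _ ↦ rfl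
  rw [mem_filter_univ, mem_graphsWithEdges, Fin.ext_iff]

lemma card_treePairs_le_eq_natCard {V : Type*} [Fintype V] (G : SimpleGraph V) (m : ℕ) :
    #{q ∈ treePairs V | (q.1 ≤ G ∧ q.2 ≤ G) ∧ commonEdges q = m} =
      Nat.card {q : SimpleGraph V × SimpleGraph V // q.1 ≤ G ∧ q.2 ≤ G ∧ q.1.IsTree ∧
        q.2.IsTree ∧ Nat.card (q.1 ⊓ q.2).edgeSet = m} := by
  refine (Nat.subtype_card _ fun q ↦ ?_).symm
  rw [mem_filter, treePairs, mem_product, mem_spanningTrees, mem_spanningTrees, commonEdges,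
    Nat.card_coe_set_eq]
  tauto

lemma card_trees_le_eq_natCard {V : Type*} [Fintype V] (G : SimpleGraph V) :
    #{T ∈ spanningTrees V | T ≤ G} = Nat.card {T : SimpleGraph V // T ≤ G ∧ T.IsTree} := by
  refine (Nat.subtype_card _ fun T ↦ ?_).symm
  rw [mem_filter, mem_spanningTrees, and_comm]

lemma erdosRenyiProbCommonEdgesEq_eq_sum_bernstein (n : ℕ) (p : unitInterval) (m : ℕ) :
    erdosRenyiProbCommonEdgesEq n p m = ∑ k : Fin (n.choose 2 + 1),
      bernstein (n.choose 2) k p * 𝔼 G ∈ graphsWithEdges (Fin n) k, commonEdgesProb G m := by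
  rw [erdosRenyiProbCommonEdgesEq, sum_eq_sum_graphsWithEdges, Fintype.card_fin]
  refine sum_congr rfl fun k _ ↦ ?_
  have hchoose : ((n.choose 2).choose k : ℝ) ≠ 0 := by
    exact_mod_cast (Nat.choose_pos k.is_le).ne'
  rw [bernstein_apply, expect_eq_sum_div_card, card_graphsWithEdges, Fintype.card_fin, mul_div,
    mul_assoc, mul_assoc, mul_div_cancel_left₀ _ hchoose, ← mul_assoc, mul_sum]
  refine sum_congr rfl fun G hG ↦ ?_
  rw [commonEdgesProb, card_treePairs_le_eq_natCard, card_trees_le_eq_natCard,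
    Nat.card_coe_set_eq G.edgeSet, mem_graphsWithEdges.1 hG]
  congr

end BinomialModel

end SpanningTreeOverlap

open SpanningTreeOverlap Finset Filter
open scoped BigOperators

/-- Fix a real `0 < p < 1` and `m ≥ 0`.  For `G ~ G(n,p)` and `X` the
number of common edges of two independent uniformly random spanning trees of `G`
(with `X = 0` if `G` is disconnected), `P(X = m) → e^(−2/p) (2/p)^m / m!` as `n → ∞`;
that is, `X` converges in distribution to a Poisson distribution of mean `2/p`. -/
theorem erdos_renyi_poisson_limit (p : ℝ) (hp : 0 < p) (hp1 : p < 1) (m : ℕ) :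
    Filter.Tendsto (fun n => erdosRenyiProbCommonEdgesEq n p m) Filter.atTop
      (nhds (Real.exp (-2 / p) * (2 / p) ^ m / m.factorial)) := by
  have hN := tendsto_proportionFilter atTop (fun n : ℕ ↦ n.choose 2) p
  have hlim := tendsto_expect_commonEdgesProb (n := Prod.fst) (M := Prod.snd) hN.fst
    (eventually_le_proportionFilter atTop _ p) hp hN.snd m
  have hmix := tendsto_sum_bernstein_mul tendsto_choose_two_atTop ⟨p, hp.le, hp1.le⟩
    (g := fun n k ↦ 𝔼 G ∈ graphsWithEdges (Fin n) k, commonEdgesProb G m)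
    (fun n k _ ↦ abs_expect_commonEdgesProb_sub_le _ m _) hlim
  simpa only [← erdosRenyiProbCommonEdgesEq_eq_sum_bernstein, neg_div, mul_div_assoc] using hmix
end

section
/- Let K_{n_1,…,n_d} be the complete multipartite graph with vertex partition V_1 ∪ ⋯ ∪ V_d, |V_i| = n_i, n = n_1 + ⋯ + n_d, d ≥ 2. Let F be a spanning forest of K_{n_1,…,n_d} with components T_1,…,T_k and let n_{ij} be the number of vertices of T_j in V_i. Set α_j = Σ_{i=1}^d (n−n_i) n_{ij} and a_{pq} = Σ_{j=1}^k n_{pj} n_{qj} / α_j. Then the number of spanning trees of K_{n_1,…,n_d} containing F equals (∏_{j=1}^k α_j) / ((d−1)^{d−2} ∏_{i=1}^d (n−n_i)²) times Σ over all spanning trees T of the complete graph K_d on vertices v_1,…,v_d of ∏ over edges v_p v_q of T of (n−n_p)(n−n_q)(1 − (d−1) a_{pq}). -/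
/-- `n_{ij}`: the number of vertices of the component `j` of the forest `F` that lie in
the `i`-th part of the complete multipartite graph. -/
noncomputable def multipartiteNij {d : ℕ} (nn : Fin d → ℕ)
    (F : SimpleGraph (Σ i : Fin d, Fin (nn i))) (i : Fin d)
    (j : F.ConnectedComponent) : ℕ :=
  Nat.card {v : Σ i : Fin d, Fin (nn i) // v.1 = i ∧ F.connectedComponentMk v = j}

/-- `α_j = Σ_{i=1}^d (n − n_i) n_{ij}`, where `n = n_1 + ⋯ + n_d`. -/
noncomputable def multipartiteAlpha {d : ℕ} (nn : Fin d → ℕ)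
    (F : SimpleGraph (Σ i : Fin d, Fin (nn i))) (j : F.ConnectedComponent) : ℚ :=
  ∑ i : Fin d, ((∑ i', nn i' : ℕ) - (nn i : ℚ)) * multipartiteNij nn F i j

/-- `a_{pq} = Σ_{j=1}^k n_{pj} n_{qj} / α_j`, the sum taken over all components of `F`. -/
noncomputable def multipartiteA {d : ℕ} (nn : Fin d → ℕ)
    (F : SimpleGraph (Σ i : Fin d, Fin (nn i))) (p q : Fin d) : ℚ :=
  ∑ᶠ j : F.ConnectedComponent,
    (multipartiteNij nn F p j * multipartiteNij nn F q j : ℚ) / multipartiteAlpha nn F j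

/-!
Contract the components of `F`.  The spanning trees of the multipartite graph which contain `F`
are the spanning trees of the quotient multigraph.  By the matrix-tree theorem, if the Laplacian of
a weighted graph is perturbed by a matrix `x yᵀ`, its determinant becomes `∑ x_i · ∑ y_i` times the
weighted number of spanning trees.

Let `B = (n_{ij})` and `N_i = n - n_i`, let `M` be the adjacency matrix of `K_d`, and let
`a = B diag(α)⁻¹ Bᵀ`.  The quotient Laplacian is `diag(α) - Bᵀ M B`.  Perturb it by `α αᵀ`; as
`det (1 - X Y) = det (1 - Y X)`, the result has determinant `∏ α_j · det (1 - M a + N (B 1)ᵀ)`,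
where the last matrix is of size `d`.  Since `a N = B 1`, the weights
`N_p N_q (1 - (d - 1) a_{pq})` have sum `(d - 1) N_p²` in the row `p`.  Hence multiplication by `M`
turns the Laplacian of `K_d` with these weights, suitably perturbed and stripped of the factors
`N_p` of its rows and columns, into a multiple of the same matrix.
-/

section ReducedDeterminant

open Matrix

variable {n R : Type*} [Fintype n] [DecidableEq n] [CommRing R]

lemma det_updateRow_of_mulVec_one_eq_zero {L : Matrix n n R} (hL : L *ᵥ 1 = 0) (r : n)
    (y : n → R) : (L.updateRow r y).det = (∑ i, y i) * L.adjugate r r := by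
  have hker : (L.updateRow r (y - (∑ i, y i) • Pi.single r 1)).det = 0 := by
    refine det_eq_zero_of_mulVec_eq_zero_of_mem_nonZeroDivisors (v := 1) (i := r) ?_
      (one_mem _)
    rw [updateRow_mulVec, hL]
    simp [dotProduct_one, ← Finset.mul_sum]
  rw [← sub_add_cancel y ((∑ i, y i) • Pi.single r 1), det_updateRow_add, hker, zero_add,
    det_updateRow_smul, ← adjugate_apply, sub_add_cancel]

lemma det_add_vecMulVec_of_mulVec_one_eq_zero {L : Matrix n n R} (hrow : L *ᵥ 1 = 0)
    (hcol : 1 ᵥ* L = 0) (r : n) (x y : n → R) :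
    (L + vecMulVec x y).det = (∑ i, x i) * (∑ i, y i) * L.adjugate r r := by
  have hsum : (1 : n → R) ᵥ* (L + vecMulVec x y) = (∑ i, x i) • y := by
    rw [vecMul_add, hcol, zero_add, vecMul_vecMulVec, one_dotProduct]
  have hclear : ((L + vecMulVec x y).updateRow r y).det = (L.updateRow r y).det := by
    refine det_eq_of_forall_row_eq_smul_add_const (Function.update x r 0) r (by simp) ?_
    intro i j
    obtain rfl | hi := eq_or_ne i r
    · simp
    · simp [hi, vecMulVec_apply]
  calc (L + vecMulVec x y).det
      = ((L + vecMulVec x y).updateRow r ((∑ i, x i) • y)).det := by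
        rw [← hsum, vecMul_eq_sum, det_updateRow_sum, Pi.one_apply, one_smul]
    _ = (∑ i, x i) * (∑ i, y i) * L.adjugate r r := by
        rw [det_updateRow_smul, hclear, det_updateRow_of_mulVec_one_eq_zero hrow, mul_assoc]

end ReducedDeterminant

/-- `f` is the parent function of a tree on `C` rooted at `r`: iterating `f` leads from every point
to `r`.  The value `f r` is irrelevant. -/
def IsParentFunction {C : Type*} (r : C) (f : C → C) : Prop := ∀ j, ∃ n, f^[n] j = r

namespace IsParentFunction

variable {C : Type*} {r : C} {f : C → C}

lemma induction (hf : IsParentFunction r f) {P : C → Prop} (root : P r)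
    (step : ∀ j ≠ r, P (f j) → P j) (j : C) : P j := by
  obtain ⟨n, hn⟩ := hf j
  induction n generalizing j with
  | zero => exact (show j = r from hn) ▸ root
  | succ n ih =>
    obtain rfl | hj := eq_or_ne j r
    · exact root
    · exact step j hj (ih (f j) hn)

lemma of_height (h : C → ℕ) (hh : ∀ j ≠ r, h (f j) < h j) : IsParentFunction r f := by
  intro j
  induction hj : h j using Nat.strong_induction_on generalizing j with
  | _ n ih =>
    obtain rfl | hjr := eq_or_ne j r
    · exact ⟨0, rfl⟩
    · obtain ⟨m, hm⟩ := ih _ (hj ▸ hh j hjr) (f j) rfl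
      exact ⟨m + 1, hm⟩

lemma exists_height (hf : IsParentFunction r f) : ∃ h : C → ℕ, ∀ j ≠ r, h (f j) < h j := by
  classical
  refine ⟨fun j ↦ Nat.find (hf j), fun j hj ↦ ?_⟩
  obtain ⟨m, hm⟩ := Nat.exists_eq_succ_of_ne_zero (n := Nat.find (hf j)) fun h0 ↦
    hj (by simpa [h0] using Nat.find_spec (hf j))
  have hfm : f^[m] (f j) = r := by
    simpa [hm] using Nat.find_spec (hf j)
  exact (Nat.lt_succ_of_le (Nat.find_min' (hf (f j)) hfm)).trans_eq hm.symm

end IsParentFunction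

section FunctionalDigraph

open Matrix

/-- The matrix of `f`, with entries `1` at the places `(v, f v)` and `0` elsewhere. -/
def functionMatrix {V C : Type*} [DecidableEq C] (R : Type*) [Zero R] [One R] (f : V → C) :
    Matrix V C R :=
  (1 : Matrix C C R).submatrix f id

variable {V C R : Type*} [Fintype C] [DecidableEq C]

lemma functionMatrix_mulVec [Semiring R] (f : V → C) (x : C → R) :
    functionMatrix R f *ᵥ x = x ∘ f :=
  funext fun v ↦ congrFun (one_mulVec x) (f v)

lemma functionMatrix_mul [Semiring R] {D : Type*} (f : V → C) (A : Matrix C D R) :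
    functionMatrix R f * A = A.submatrix f id := by
  ext v j
  exact congrFun (congrFun (Matrix.one_mul A) (f v)) j

variable [CommRing R] {r : C} {f : C → C}

lemma adjugate_one_sub_functionMatrix_of_isParentFunction (hf : IsParentFunction r f) :
    (1 - functionMatrix R f).adjugate r r = 1 := by
  obtain ⟨h, hh⟩ := hf.exists_height
  set A := (1 - functionMatrix R f).updateRow r (Pi.single r 1) with hA
  have hAone : ∀ i j, h i ≤ h j → A i j = (1 : Matrix C C R) i j := by
    intro i j hij
    obtain rfl | hi := eq_or_ne i r
    · simp [hA, one_apply, Pi.single_apply, eq_comm]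
    · have hfj : f i ≠ j := fun e ↦ (hh i hi).not_ge (e ▸ hij)
      rw [hA, updateRow_ne hi, Matrix.sub_apply, functionMatrix, submatrix_apply, id,
        one_apply_ne hfj, sub_zero]
  have hblock : A.BlockTriangular (OrderDual.toDual ∘ h) := fun i j hij ↦ by
    have hlt : h i < h j := hij
    rw [hAone i j hlt.le, one_apply_ne (ne_of_apply_ne h hlt.ne)]
  rw [adjugate_apply, ← hA, hblock.det]
  refine Finset.prod_eq_one fun a _ ↦ ?_
  have hone : A.toSquareBlock (OrderDual.toDual ∘ h) a = 1 := by
    ext i j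
    rw [toSquareBlock_def, of_apply, hAone i j (OrderDual.toDual_inj.1 (i.2.trans j.2.symm)).le]
    simp [one_apply, Subtype.ext_iff]
  rw [hone, det_one]

lemma adjugate_one_sub_functionMatrix_of_not_isParentFunction (hf : ¬ IsParentFunction r f) :
    (1 - functionMatrix R f).adjugate r r = 0 := by
  classical
  obtain ⟨j, hj⟩ : ∃ j, ∀ n, f^[n] j ≠ r := by simpa [IsParentFunction] using hf
  let S : Set C := {j | ∀ n, f^[n] j ≠ r}
  have hr : r ∉ S := fun h ↦ h 0 rfl
  have hS : ∀ i ≠ r, (f i ∈ S ↔ i ∈ S) := fun i hi ↦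
    ⟨fun h n ↦ n.casesOn hi h, fun h n ↦ h (n + 1)⟩
  rw [adjugate_apply]
  refine det_eq_zero_of_mulVec_eq_zero_of_mem_nonZeroDivisors (v := S.indicator 1) (i := j) ?_
    (by simp [Set.indicator_of_mem (show j ∈ S from hj)])
  ext i
  obtain rfl | hi := eq_or_ne i r
  · simp [updateRow_mulVec, hr]
  · rw [updateRow_mulVec, Function.update_of_ne hi, sub_mulVec, one_mulVec, Pi.sub_apply,
      functionMatrix_mulVec, Function.comp_apply, Pi.zero_apply, sub_eq_zero]
    simp only [Set.indicator, hS i hi, Pi.one_apply]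

lemma det_weightedRows (a : C → R) (r : C) (f : C → C) :
    (of fun i ↦ if i = r then Pi.single i 1
      else a i • (Pi.single i 1 - Pi.single (f i) 1 : C → R)).det =
      (∏ j with j ≠ r, a j) * (1 - functionMatrix R f).adjugate r r := by
  rw [adjugate_apply, Finset.prod_filter, ← det_mul_column]
  congr 1
  ext i j
  obtain rfl | hi := eq_or_ne i r
  · simp
  · simp [functionMatrix, hi, one_apply, Pi.single_apply, eq_comm (a := j)]

end FunctionalDigraph

/-- `c` labels the vertices of `F` by its connected components, the labels being the points
of `C`. -/
structure IsComponentMap {V C : Type*} (F : SimpleGraph V) (c : V → C) : Prop where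
  surjective : Function.Surjective c
  eq_iff_reachable {u v : V} : c u = c v ↔ F.Reachable u v

lemma isComponentMap_connectedComponentMk {V : Type*} (F : SimpleGraph V) :
    IsComponentMap F F.connectedComponentMk :=
  ⟨Quot.mk_surjective, SimpleGraph.ConnectedComponent.eq⟩

lemma isComponentMap_bot_id {V : Type*} : IsComponentMap (⊥ : SimpleGraph V) id :=
  ⟨Function.surjective_id, SimpleGraph.reachable_bot.symm⟩

/-- An orientation towards the root `r` of a spanning tree of the quotient by `c`, every edge of
the quotient being lifted to a pair of vertices: the component `j` is left through the edge from
`(g j).1 ∈ j` to `(g j).2`.  At the component of the root, `g` takes the fixed value `(r, r)`, so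
that it is determined by the tree. -/
structure IsExitChoice {V C : Type*} (c : V → C) (r : V) (g : C → V × V) : Prop where
  root : g (c r) = (r, r)
  fst (j : C) : c (g j).1 = j
  isParentFunction : IsParentFunction (c r) fun j ↦ c (g j).2

/-- The edges of `F` together with the exit edges chosen by `g`.  The loop which `g` chooses at
the component of the root is discarded by `SimpleGraph.fromEdgeSet`. -/
def exitGraph {V C : Type*} (F : SimpleGraph V) (g : C → V × V) : SimpleGraph V :=
  F ⊔ SimpleGraph.fromEdgeSet (Set.range fun j ↦ s((g j).1, (g j).2))

lemma exists_adj_dist_lt {V : Type*} {T : SimpleGraph V} (hT : T.Connected) {r u : V}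
    (hu : u ≠ r) : ∃ v, T.Adj u v ∧ T.dist v r < T.dist u r := by
  obtain ⟨p, hp⟩ := hT.exists_walk_length_eq_dist u r
  cases p with
  | nil => exact absurd rfl hu
  | cons h q =>
    exact ⟨_, h, (SimpleGraph.dist_le q).trans_lt (hp ▸ Nat.lt_succ_self q.length)⟩

namespace IsExitChoice

variable {V C : Type*} {F T : SimpleGraph V} {c : V → C} {r : V} {g g' : C → V × V}

lemma snd_ne (hg : IsExitChoice c r g) {j : C} (hj : j ≠ c r) : c (g j).2 ≠ j := by
  obtain ⟨h, hh⟩ := hg.isParentFunction.exists_height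
  exact fun e ↦ (hh j hj).ne (congrArg h e)

lemma injOn_edge (hg : IsExitChoice c r g) :
    Set.InjOn (fun j ↦ s((g j).1, (g j).2)) {j | j ≠ c r} := by
  obtain ⟨h, hh⟩ := hg.isParentFunction.exists_height
  intro i hi j hj hij
  rcases Sym2.eq_iff.1 hij with ⟨h1, -⟩ | ⟨h1, h2⟩
  · rw [← hg.fst i, h1, hg.fst j]
  · have hji : h j < h i := by simpa [h2, hg.fst] using hh i hi
    have hij : h i < h j := by simpa [← h1, hg.fst] using hh j hj
    exact absurd hij hji.asymm

lemma adj (hg : IsExitChoice c r g) {j : C} (hj : j ≠ c r) :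
    (exitGraph F g).Adj (g j).1 (g j).2 := by
  refine Or.inr ((SimpleGraph.fromEdgeSet_adj _).2 ⟨⟨j, rfl⟩, fun h ↦ hg.snd_ne hj ?_⟩)
  rw [← h, hg.fst]

lemma edgeSet_exitGraph_sdiff (hg : IsExitChoice c r g) (hc : IsComponentMap F c) :
    (exitGraph F g).edgeSet \ F.edgeSet = (fun j ↦ s((g j).1, (g j).2)) '' {j | j ≠ c r} := by
  ext e
  constructor
  · rintro ⟨he, heF⟩
    rw [exitGraph, SimpleGraph.edgeSet_sup, SimpleGraph.edgeSet_fromEdgeSet] at he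
    obtain ⟨⟨j, rfl⟩, hdiag⟩ := he.resolve_left heF
    refine ⟨j, ?_, rfl⟩
    rintro rfl
    exact hdiag (by simp [hg.root])
  · rintro ⟨j, hj, rfl⟩
    refine ⟨hg.adj hj, fun hF ↦ hg.snd_ne hj ?_⟩
    rw [← hc.eq_iff_reachable.2 (SimpleGraph.Adj.reachable hF), hg.fst]

lemma connected (hg : IsExitChoice c r g) (hc : IsComponentMap F c) :
    (exitGraph F g).Connected := by
  have hF {u v : V} (huv : c u = c v) : (exitGraph F g).Reachable u v :=
    (hc.eq_iff_reachable.1 huv).mono le_sup_left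
  have hroot (j : C) : ∀ v, c v = j → (exitGraph F g).Reachable v r := by
    induction j using hg.isParentFunction.induction with
    | root => exact fun v ↦ hF
    | step j hj ih =>
      intro v hv
      exact ((hF (hv.trans (hg.fst j).symm)).trans (hg.adj hj).reachable).trans (ih _ rfl)
  have : Nonempty V := ⟨r⟩
  exact ⟨fun u v ↦ (hroot _ u rfl).trans (hroot _ v rfl).symm⟩

lemma exitGraph_le (hg : IsExitChoice c r g) (hFT : F ≤ T)
    (hadj : ∀ j ≠ c r, T.Adj (g j).1 (g j).2) : exitGraph F g ≤ T := by
  refine sup_le hFT ((SimpleGraph.fromEdgeSet_le _).2 ?_)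
  rintro _ ⟨⟨j, rfl⟩, hdiag⟩
  refine hadj j ?_
  rintro rfl
  exact hdiag (by simp [hg.root])

lemma eq_of_exitGraph_le (hg : IsExitChoice c r g) (hg' : IsExitChoice c r g')
    (hc : IsComponentMap F c) (hle : exitGraph F g ≤ exitGraph F g') : g = g' := by
  have hedge {j : C} (hj : j ≠ c r) : ∃ i ≠ c r, s((g' i).1, (g' i).2) = s((g j).1, (g j).2) := by
    have hmem : s((g j).1, (g j).2) ∈ (exitGraph F g).edgeSet \ F.edgeSet := by
      rw [hg.edgeSet_exitGraph_sdiff hc]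
      exact ⟨j, hj, rfl⟩
    have hmem' := Set.sdiff_subset_sdiff_left (SimpleGraph.edgeSet_mono hle) hmem
    rwa [hg'.edgeSet_exitGraph_sdiff hc] at hmem'
  funext j
  induction j using hg.isParentFunction.induction with
  | root => rw [hg.root, hg'.root]
  | step j hj ih =>
    obtain ⟨i, hi, hij⟩ := hedge hj
    rcases Sym2.eq_iff.1 hij with ⟨h1, h2⟩ | ⟨h1, h2⟩
    · obtain rfl : i = j := by rw [← hg'.fst i, h1, hg.fst]
      exact (Prod.ext h1 h2).symm
    · -- `i` is the parent of `j`, so `g` already agrees with `g'` there and uses this edge twice.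
      obtain rfl : i = c (g j).2 := by rw [← h1, hg'.fst]
      exact absurd (hg.injOn_edge hi hj (by simpa only [ih] using hij)) (hg.snd_ne hj)

end IsExitChoice

lemma exists_isExitChoice_exitGraph_le {V C : Type*} {F T : SimpleGraph V} {c : V → C}
    (hc : IsComponentMap F c) (r : V) (hT : T.Connected) (hFT : F ≤ T) :
    ∃ g, IsExitChoice c r g ∧ exitGraph F g ≤ T := by
  classical
  choose! next hadj hlt using fun u (hu : u ≠ r) ↦ exists_adj_dist_lt hT hu
  let nearest (j : C) : V := Function.argminOn (T.dist · r) (c ⁻¹' {j}) (hc.surjective j)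
  have hnearest (j : C) : c (nearest j) = j := Function.argminOn_mem _ _ (hc.surjective j)
  have hne (j : C) (hj : j ≠ c r) : nearest j ≠ r := fun h ↦ hj (by rw [← hnearest j, h])
  let g : C → V × V := Function.update (fun j ↦ (nearest j, next (nearest j))) (c r) (r, r)
  have hg (j : C) (hj : j ≠ c r) : g j = (nearest j, next (nearest j)) :=
    Function.update_of_ne hj _ _
  have hexit : IsExitChoice c r g := by
    refine ⟨Function.update_self _ _ _, fun j ↦ ?_, .of_height (fun j ↦ T.dist (nearest j) r) ?_⟩
    · obtain rfl | hj := eq_or_ne j (c r)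
      · simp [g]
      · rw [hg j hj, hnearest]
    · intro j hj
      rw [hg j hj]
      exact (Function.argminOn_le (T.dist · r) (c ⁻¹' {c (next (nearest j))}) rfl).trans_lt
        (hlt _ (hne j hj))
  exact ⟨g, hexit, hexit.exitGraph_le hFT fun j hj ↦ by simpa [hg j hj] using hadj _ (hne j hj)⟩

lemma IsExitChoice.isTree {V C : Type*} {F : SimpleGraph V} {c : V → C} {r : V} {g : C → V × V}
    (hg : IsExitChoice c r g) (hc : IsComponentMap F c) (hF : F.IsAcyclic) :
    (exitGraph F g).IsTree := by
  obtain ⟨T, hFT, hTle, hT⟩ :=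
    (hg.connected hc).exists_isTree_le_of_le_of_isAcyclic le_sup_left hF
  obtain ⟨g', hg', hle⟩ := exists_isExitChoice_exitGraph_le hc r hT.connected hFT
  obtain rfl := hg'.eq_of_exitGraph_le hg hc (hle.trans hTle)
  rwa [le_antisymm hle hTle]

lemma exists_isExitChoice_exitGraph_eq {V C : Type*} {F T : SimpleGraph V} {c : V → C}
    (hc : IsComponentMap F c) (r : V) (hT : T.IsTree) (hFT : F ≤ T) :
    ∃ g, IsExitChoice c r g ∧ exitGraph F g = T := by
  obtain ⟨g, hg, hle⟩ := exists_isExitChoice_exitGraph_le hc r hT.connected hFT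
  exact ⟨g, hg, hle.antisymm
    ((SimpleGraph.isTree_iff_minimal_connected.1 hT).2 (hg.connected hc) hle)⟩

section MatrixTree

open Matrix

variable {V C R : Type*} [Fintype V] [CommRing R]

/-- The Laplacian matrix of the complete graph on `V` with edge weights `w`.  The weights of loops
cancel. -/
def weightedLaplacian [DecidableEq V] (w : Sym2 V → R) : Matrix V V R :=
  diagonal (fun u ↦ ∑ v, w s(u, v)) - of fun u v ↦ w s(u, v)

/-- The Laplacian matrix of the weighted complete graph on `V` after contraction of the fibers
of `c`. -/
def quotientLaplacian [DecidableEq V] [DecidableEq C] (c : V → C) (w : Sym2 V → R) :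
    Matrix C C R :=
  (functionMatrix R c)ᵀ * weightedLaplacian w * functionMatrix R c

open Classical in
/-- The generating function of the spanning trees containing `F`, each of them weighted by its
edges outside `F`. -/
noncomputable def extensionWeight (F : SimpleGraph V) (w : Sym2 V → R) : R :=
  ∑ T : SimpleGraph V with F ≤ T ∧ T.IsTree, ∏ e with e ∈ T.edgeSet \ F.edgeSet, w e

lemma weightedLaplacian_mulVec [DecidableEq V] (w : Sym2 V → R) (x : V → R) (u : V) :
    (weightedLaplacian w *ᵥ x) u = ∑ v, w s(u, v) * (x u - x v) := by
  rw [weightedLaplacian, sub_mulVec, Pi.sub_apply, mulVec_diagonal]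
  simp only [mulVec, dotProduct, of_apply, mul_sub, Finset.sum_sub_distrib, Finset.sum_mul]

lemma weightedLaplacian_isSymm [DecidableEq V] (w : Sym2 V → R) : (weightedLaplacian w).IsSymm := by
  refine (isSymm_diagonal _).sub (IsSymm.ext fun u v ↦ ?_)
  simp only [of_apply, Sym2.eq_swap]

lemma quotientLaplacian_id [DecidableEq V] (w : Sym2 V → R) :
    quotientLaplacian id w = weightedLaplacian w := by
  simp [quotientLaplacian, functionMatrix]

variable [DecidableEq C]

open Classical in
lemma sum_isExitChoice_eq_extensionWeight [Fintype C] {F : SimpleGraph V} {c : V → C}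
    (hc : IsComponentMap F c) (hF : F.IsAcyclic) (r : V) (w : Sym2 V → R) :
    ∑ g : C → V × V with IsExitChoice c r g, ∏ j with j ≠ c r, w s((g j).1, (g j).2) =
      extensionWeight F w := by
  rw [extensionWeight]
  refine Finset.sum_bij (fun g _ ↦ exitGraph F g) ?_ ?_ ?_ ?_
  · intro g hg
    simp only [Finset.mem_filter, Finset.mem_univ, true_and] at hg ⊢
    exact ⟨le_sup_left, hg.isTree hc hF⟩
  · intro g hg g' hg' h
    simp only [Finset.mem_filter, Finset.mem_univ, true_and] at hg hg'
    exact hg.eq_of_exitGraph_le hg' hc h.le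
  · intro T hT
    simp only [Finset.mem_filter, Finset.mem_univ, true_and] at hT
    obtain ⟨g, hg, h⟩ := exists_isExitChoice_exitGraph_eq hc r hT.2 hT.1
    exact ⟨g, by simpa using hg, h⟩
  · intro g hg
    simp only [Finset.mem_filter, Finset.mem_univ, true_and] at hg
    rw [← Finset.prod_image (s := {j | j ≠ c r}) (g := fun j ↦ s((g j).1, (g j).2)) (f := w)
      fun i hi j hj ↦ hg.injOn_edge (by simpa using hi) (by simpa using hj)]
    refine Finset.prod_congr (Finset.ext fun e ↦ ?_) fun _ _ ↦ rfl
    rw [Finset.mem_filter, hg.edgeSet_exitGraph_sdiff hc]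
    simp

variable [DecidableEq V]

lemma quotientLaplacian_isSymm (c : V → C) (w : Sym2 V → R) : (quotientLaplacian c w).IsSymm := by
  simp only [quotientLaplacian, IsSymm, transpose_mul, transpose_transpose,
    (weightedLaplacian_isSymm w).eq, Matrix.mul_assoc]

lemma quotientLaplacian_mulVec_one [Fintype C] (c : V → C) (w : Sym2 V → R) :
    quotientLaplacian c w *ᵥ 1 = 0 := by
  have hL : weightedLaplacian w *ᵥ 1 = 0 := by
    ext u
    simp [weightedLaplacian_mulVec]
  rw [quotientLaplacian, ← mulVec_mulVec, functionMatrix_mulVec, Pi.one_comp, ← mulVec_mulVec, hL,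
    mulVec_zero]

lemma one_vecMul_quotientLaplacian [Fintype C] (c : V → C) (w : Sym2 V → R) :
    1 ᵥ* quotientLaplacian c w = 0 := by
  rw [← mulVec_transpose, (quotientLaplacian_isSymm c w).eq, quotientLaplacian_mulVec_one]

lemma quotientLaplacian_row (c : V → C) (w : Sym2 V → R) (i : C) :
    quotientLaplacian c w i = ∑ p : V × V with c p.1 = i,
      w s(p.1, p.2) • (Pi.single i 1 - Pi.single (c p.2) 1) := by
  ext j
  have hentry : quotientLaplacian c w i j =
      ∑ u, (1 : Matrix C C R) (c u) i * ∑ v, w s(u, v) *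
        ((1 : Matrix C C R) (c u) j - (1 : Matrix C C R) (c v) j) := by
    rw [quotientLaplacian, Matrix.mul_assoc, mul_apply]
    refine Finset.sum_congr rfl fun u _ ↦ ?_
    rw [← weightedLaplacian_mulVec w fun v ↦ (1 : Matrix C C R) (c v) j]
    rfl
  rw [hentry, Finset.sum_apply, Finset.sum_filter, Fintype.sum_prod_type]
  refine Finset.sum_congr rfl fun u _ ↦ ?_
  obtain rfl | hu := eq_or_ne (c u) i
  · simp [one_apply, Pi.single_apply, eq_comm]
  · simp [hu]

open Classical in
lemma adjugate_quotientLaplacian_eq_sum [Fintype C] (c : V → C) (r : V) (w : Sym2 V → R) :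
    (quotientLaplacian c w).adjugate (c r) (c r) =
      ∑ g : C → V × V with IsExitChoice c r g, ∏ j with j ≠ c r, w s((g j).1, (g j).2) := by
  let choices (i : C) : Finset (V × V) :=
    Finset.univ.filter fun p ↦ c p.1 = i ∧ (i = c r → p = (r, r))
  let row (i : C) (p : V × V) : C → R :=
    if i = c r then Pi.single i 1 else w s(p.1, p.2) • (Pi.single i 1 - Pi.single (c p.2) 1)
  have hrows : (quotientLaplacian c w).updateRow (c r) (Pi.single (c r) 1) =
      of fun i ↦ ∑ p ∈ choices i, row i p := by
    funext i
    change _ = ∑ p ∈ choices i, row i p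
    obtain rfl | hi := eq_or_ne i (c r)
    · have hroot : choices (c r) = {(r, r)} := by
        ext p
        simpa [choices] using fun hp : p = (r, r) ↦ by rw [hp]
      simp [hroot, row]
    · simp [choices, row, hi, quotientLaplacian_row]
  have hchoice (g : C → V × V) : IsExitChoice c r g ↔
      g ∈ Fintype.piFinset choices ∧ IsParentFunction (c r) fun j ↦ c (g j).2 := by
    simp only [Fintype.mem_piFinset, choices, Finset.mem_filter, Finset.mem_univ, true_and]
    exact ⟨fun hg ↦ ⟨fun i ↦ ⟨hg.fst i, fun h ↦ h ▸ hg.root⟩, hg.isParentFunction⟩,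
      fun ⟨h, hparent⟩ ↦ ⟨(h (c r)).2 rfl, fun i ↦ (h i).1, hparent⟩⟩
  calc (quotientLaplacian c w).adjugate (c r) (c r)
      = ∑ g ∈ Fintype.piFinset choices, (of fun i ↦ row i (g i)).det := by
        rw [adjugate_apply, hrows]
        exact (detRowAlternating (n := C) (R := R)).toMultilinearMap.map_sum_finset row choices
    _ = ∑ g ∈ Fintype.piFinset choices with IsParentFunction (c r) fun j ↦ c (g j).2,
          ∏ j with j ≠ c r, w s((g j).1, (g j).2) := by
        rw [Finset.sum_filter]
        refine Finset.sum_congr rfl fun g _ ↦ ?_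
        split_ifs with hg
        · rw [det_weightedRows, adjugate_one_sub_functionMatrix_of_isParentFunction hg, mul_one]
        · rw [det_weightedRows, adjugate_one_sub_functionMatrix_of_not_isParentFunction hg,
            mul_zero]
    _ = _ := Finset.sum_congr (by ext g; simp [hchoice]) fun _ _ ↦ rfl

theorem det_quotientLaplacian_add_vecMulVec [Fintype C] [Nonempty V] {F : SimpleGraph V}
    {c : V → C} (hc : IsComponentMap F c) (hF : F.IsAcyclic) (w : Sym2 V → R) (x y : C → R) :
    (quotientLaplacian c w + vecMulVec x y).det =
      (∑ i, x i) * (∑ i, y i) * extensionWeight F w := by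
  obtain ⟨r⟩ := ‹Nonempty V›
  rw [det_add_vecMulVec_of_mulVec_one_eq_zero (quotientLaplacian_mulVec_one c w)
    (one_vecMul_quotientLaplacian c w) (c r), adjugate_quotientLaplacian_eq_sum,
    sum_isExitChoice_eq_extensionWeight hc hF]

end MatrixTree

section DeterminantIdentities

open Matrix

variable {ι C R K : Type*} [Fintype ι] [CommRing R] [Field K]

lemma det_diagonal_sub_transpose_mul_mul [DecidableEq ι] [Fintype C] [DecidableEq C] {α : C → K}
    (hα : ∀ j, α j ≠ 0) (S : Matrix ι ι K) (B : Matrix ι C K) :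
    (diagonal α - Bᵀ * S * B).det = (∏ j, α j) * (1 - S * (B * diagonal α⁻¹ * Bᵀ)).det := by
  have hfactor : diagonal α - Bᵀ * S * B = diagonal α * (1 - (diagonal α⁻¹ * Bᵀ) * (S * B)) := by
    have hinv : diagonal α * diagonal α⁻¹ = 1 := by
      rw [diagonal_mul_diagonal, ← diagonal_one]
      exact congrArg diagonal (funext fun j ↦ mul_inv_cancel₀ (hα j))
    rw [Matrix.mul_sub, Matrix.mul_one, Matrix.mul_assoc (diagonal α⁻¹),
      ← Matrix.mul_assoc (diagonal α), hinv, Matrix.one_mul, Matrix.mul_assoc]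
  rw [hfactor, det_mul, det_diagonal, det_one_sub_mul_comm]
  simp only [Matrix.mul_assoc]

lemma vecMul_mul_diagonal_inv_mul_transpose [Fintype C] [DecidableEq C] {B : Matrix ι C K}
    {N : ι → K} (hα : ∀ j, (N ᵥ* B) j ≠ 0) :
    N ᵥ* (B * diagonal (N ᵥ* B)⁻¹ * Bᵀ) = B *ᵥ 1 := by
  have hone : (N ᵥ* B) ᵥ* diagonal (N ᵥ* B)⁻¹ = 1 := by
    ext j
    rw [vecMul_diagonal, Pi.inv_apply, mul_inv_cancel₀ (hα j), Pi.one_apply]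
  rw [← vecMul_vecMul, ← vecMul_vecMul, hone, vecMul_transpose]

variable [DecidableEq ι]

/-- The adjacency matrix of the complete graph on `ι`. -/
def completeAdjacency (ι R : Type*) [DecidableEq ι] [Ring R] : Matrix ι ι R := vecMulVec 1 1 - 1

lemma completeAdjacency_mulVec (ν : ι → R) (p : ι) :
    (completeAdjacency ι R *ᵥ ν) p = ∑ q, ν q - ν p := by
  rw [completeAdjacency, sub_mulVec, one_mulVec, vecMulVec_mulVec, one_dotProduct]
  simp

lemma det_completeAdjacency :
    (completeAdjacency ι R).det = -(-1) ^ Fintype.card ι * (Fintype.card ι - 1) := by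
  have hneg : completeAdjacency ι R =
      -(1 - replicateCol Unit (1 : ι → R) * replicateRow Unit (1 : ι → R)) := by
    rw [← vecMulVec_eq, completeAdjacency, neg_sub]
  rw [hneg, det_neg, det_one_sub_mul_comm, det_unique]
  simp only [Matrix.sub_apply, one_apply_eq, mul_apply, replicateRow_apply, replicateCol_apply,
    Pi.one_apply, mul_one, Finset.sum_const, Finset.card_univ, nsmul_eq_mul]
  ring

lemma det_smul_one_add_sub_vecMulVec_sub_vecMulVec [Nonempty ι]
    (hd : (Fintype.card ι : K) - 1 ≠ 0) (a : Matrix ι ι K) (ν : ι → K) :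
    (((Fintype.card ι : K) - 1) • (1 + a - vecMulVec ν ν) - vecMulVec 1 1).det =
      -((Fintype.card ι : K) - 1) ^ (Fintype.card ι - 1) *
        (1 - completeAdjacency ι K * a + vecMulVec (completeAdjacency ι K *ᵥ ν) ν).det := by
  set d : K := (Fintype.card ι : K) with hd_def
  set Y := (d - 1) • (1 + a - vecMulVec ν ν) - vecMulVec 1 1 with hY
  set X := 1 - completeAdjacency ι K * a + vecMulVec (completeAdjacency ι K *ᵥ ν) ν with hX
  have hMone : completeAdjacency ι K *ᵥ 1 = (d - 1) • 1 := by
    ext p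
    simp [completeAdjacency_mulVec, hd_def]
  have hmul : completeAdjacency ι K * Y = -((d - 1) • X) := by
    rw [hY, Matrix.mul_sub, mul_smul_comm, Matrix.mul_sub, Matrix.mul_add, mul_vecMulVec,
      mul_vecMulVec, hMone, smul_vecMulVec, ← smul_sub, ← smul_neg, hX]
    congr 1
    simp only [completeAdjacency, Matrix.mul_one]
    abel
  have hdet := congrArg det hmul
  rw [det_mul, det_completeAdjacency, det_neg, det_smul, ← hd_def,
    ← pow_sub_one_mul (Fintype.card_ne_zero (α := ι)) (d - 1)] at hdet
  have hne : -(-1) ^ Fintype.card ι * (d - 1) ≠ 0 :=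
    mul_ne_zero (neg_ne_zero.2 (pow_ne_zero _ (neg_ne_zero.2 one_ne_zero))) hd
  refine mul_left_cancel₀ hne ?_
  rw [hdet]
  ring

end DeterminantIdentities

section ComponentMatrix

open Matrix

variable {ι C R K : Type*} [Fintype ι] [DecidableEq ι] [Fintype C] [CommRing R] [Field K]

/-- The common degree `n - n_i` of the vertices of the part `i`, if the component `j` of the forest
has `B i j = n_{ij}` vertices in the part `i`, so that `B *ᵥ 1` lists the sizes of the parts. -/
def partDegree (B : Matrix ι C R) : ι → R := completeAdjacency ι R *ᵥ (B *ᵥ 1)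

/-- The sum `α_j` of the degrees of the vertices of the component `j`. -/
def componentDegree (B : Matrix ι C R) : C → R := partDegree B ᵥ* B

lemma componentDegree_apply (B : Matrix ι C R) (j : C) :
    componentDegree B j = ∑ i, partDegree B i * B i j :=
  rfl

lemma partDegree_pos [LinearOrder R] [IsStrictOrderedRing R] [Nontrivial ι] {B : Matrix ι C R}
    (hB : ∀ i, 0 < (B *ᵥ 1) i) (i : ι) :
    0 < partDegree B i := by
  obtain ⟨k, hk⟩ := exists_ne i
  rw [partDegree, completeAdjacency_mulVec, sub_pos]
  exact Finset.single_lt_sum hk (Finset.mem_univ i) (Finset.mem_univ k) (hB k)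
    fun q _ _ ↦ (hB q).le

variable [DecidableEq C]

/-- The matrix `a_{pq} = ∑ j, n_{pj} n_{qj} / α_j`. -/
def partOverlap (B : Matrix ι C K) : Matrix ι ι K := B * diagonal (componentDegree B)⁻¹ * Bᵀ

lemma partOverlap_isSymm (B : Matrix ι C K) : (partOverlap B).IsSymm := by
  simp only [partOverlap, IsSymm, transpose_mul, transpose_transpose, diagonal_transpose,
    Matrix.mul_assoc]

lemma partOverlap_apply (B : Matrix ι C K) (p q : ι) :
    partOverlap B p q = ∑ j, B p j * B q j / componentDegree B j := by
  rw [partOverlap, mul_apply]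
  refine Finset.sum_congr rfl fun j _ ↦ ?_
  rw [mul_diagonal, transpose_apply, Pi.inv_apply, div_eq_mul_inv, mul_right_comm]

/-- The weight `(n - n_p) (n - n_q) (1 - (d - 1) a_{pq})` of the edge `pq` of the complete graph
on the parts. -/
def partWeight (B : Matrix ι C K) : Sym2 ι → K :=
  Sym2.lift ⟨fun p q ↦ partDegree B p * partDegree B q *
    (1 - ((Fintype.card ι : K) - 1) * partOverlap B p q), fun p q ↦ by
      simp only [(partOverlap_isSymm B).apply p q, mul_comm (partDegree B p)]⟩

lemma partOverlap_mulVec_partDegree {B : Matrix ι C K} (hα : ∀ j, componentDegree B j ≠ 0) :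
    partOverlap B *ᵥ partDegree B = B *ᵥ 1 := by
  rw [← (partOverlap_isSymm B).eq, mulVec_transpose]
  exact vecMul_mul_diagonal_inv_mul_transpose hα

lemma det_diagonal_componentDegree_sub_add_vecMulVec {B : Matrix ι C K}
    (hα : ∀ j, componentDegree B j ≠ 0) :
    (diagonal (componentDegree B) - Bᵀ * completeAdjacency ι K * B +
        vecMulVec (componentDegree B) (componentDegree B)).det =
      (∏ j, componentDegree B j) * (1 - completeAdjacency ι K * partOverlap B +
        vecMulVec (partDegree B) (B *ᵥ 1)).det := by
  have hrank : diagonal (componentDegree B) - Bᵀ * completeAdjacency ι K * B +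
        vecMulVec (componentDegree B) (componentDegree B) = diagonal (componentDegree B) -
      Bᵀ * (completeAdjacency ι K - vecMulVec (partDegree B) (partDegree B)) * B := by
    rw [Matrix.mul_sub, Matrix.sub_mul, mul_vecMulVec, vecMulVec_mul, mulVec_transpose,
      componentDegree, sub_sub_eq_add_sub, sub_add_eq_add_sub]
  rw [hrank, det_diagonal_sub_transpose_mul_mul hα, ← partOverlap, Matrix.sub_mul, vecMulVec_mul,
    ← mulVec_transpose, (partOverlap_isSymm B).eq, partOverlap_mulVec_partDegree hα, sub_add]

lemma sum_partWeight {B : Matrix ι C K} (hα : ∀ j, componentDegree B j ≠ 0) (p : ι) :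
    ∑ q, partWeight B s(p, q) = ((Fintype.card ι : K) - 1) * partDegree B p ^ 2 := by
  have hsum : ∑ q, partDegree B q = ((Fintype.card ι : K) - 1) * ∑ q, (B *ᵥ 1) q := by
    simp only [partDegree, completeAdjacency_mulVec, Finset.sum_sub_distrib, Finset.sum_const,
      Finset.card_univ, nsmul_eq_mul]
    ring
  have hoverlap : ∑ q, partOverlap B p q * partDegree B q = (B *ᵥ 1) p :=
    congrFun (partOverlap_mulVec_partDegree hα) p
  have hp : partDegree B p = ∑ q, (B *ᵥ 1) q - (B *ᵥ 1) p := completeAdjacency_mulVec _ p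
  calc ∑ q, partWeight B s(p, q)
      = partDegree B p * (∑ q, partDegree B q -
          ((Fintype.card ι : K) - 1) * ∑ q, partOverlap B p q * partDegree B q) := by
        rw [Finset.mul_sum, ← Finset.sum_sub_distrib, Finset.mul_sum]
        refine Finset.sum_congr rfl fun q _ ↦ ?_
        simp only [partWeight, Sym2.lift_mk]
        ring
    _ = ((Fintype.card ι : K) - 1) * partDegree B p ^ 2 := by
        rw [hsum, hoverlap, hp]
        ring

lemma weightedLaplacian_partWeight_add_vecMulVec {B : Matrix ι C K}
    (hα : ∀ j, componentDegree B j ≠ 0) :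
    weightedLaplacian (partWeight B) + vecMulVec (-((Fintype.card ι : K) - 1) •
        (partDegree B * B *ᵥ 1)) (partDegree B * B *ᵥ 1) =
      diagonal (partDegree B) * (((Fintype.card ι : K) - 1) • (1 + partOverlap B -
        vecMulVec (B *ᵥ 1) (B *ᵥ 1)) - vecMulVec 1 1) * diagonal (partDegree B) := by
  simp only [weightedLaplacian, sum_partWeight hα]
  ext p q
  simp only [Matrix.add_apply, Matrix.sub_apply, of_apply, vecMulVec_apply, mul_diagonal,
    diagonal_mul, Matrix.smul_apply, Pi.smul_apply, Pi.mul_apply, Pi.one_apply, smul_eq_mul,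
    diagonal_apply, one_apply, partWeight, Sym2.lift_mk]
  split_ifs with hpq
  · subst hpq
    ring
  · ring

/-- Both determinants are multiples of that of
`1 - M * partOverlap B + vecMulVec (partDegree B) (B *ᵥ 1)`, where `M` is the adjacency matrix of
the complete graph on the parts. -/
lemma prod_componentDegree_mul_det_partWeight [Nonempty ι] {B : Matrix ι C K}
    (hd : (Fintype.card ι : K) - 1 ≠ 0) (hα : ∀ j, componentDegree B j ≠ 0) :
    (∏ j, componentDegree B j) * (weightedLaplacian (partWeight B) +
        vecMulVec (-((Fintype.card ι : K) - 1) • (partDegree B * B *ᵥ 1))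
          (partDegree B * B *ᵥ 1)).det =
      -((Fintype.card ι : K) - 1) ^ (Fintype.card ι - 1) * (∏ i, partDegree B i ^ 2) *
        (diagonal (componentDegree B) - Bᵀ * completeAdjacency ι K * B +
          vecMulVec (componentDegree B) (componentDegree B)).det := by
  rw [weightedLaplacian_partWeight_add_vecMulVec hα, det_mul, det_mul, det_diagonal,
    det_smul_one_add_sub_vecMulVec_sub_vecMulVec hd, ← partDegree,
    det_diagonal_componentDegree_sub_add_vecMulVec hα, Finset.prod_pow]
  ring

end ComponentMatrix

section FiberCount

open Matrix

variable {V ι C R K : Type*} [Fintype V] [DecidableEq ι] [DecidableEq C]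

/-- The matrix of the numbers `n_{ij}` of elements which the fiber of `part` over `i` and the fiber
of `c` over `j` have in common. -/
def fiberCount (R : Type*) [Semiring R] (part : V → ι) (c : V → C) : Matrix ι C R :=
  (functionMatrix R part)ᵀ * functionMatrix R c

lemma fiberCount_apply [Semiring R] (part : V → ι) (c : V → C) (i : ι) (j : C) :
    fiberCount R part c i j = Nat.card {v // part v = i ∧ c v = j} := by
  rw [fiberCount, mul_apply, Nat.card_eq_fintype_card, Fintype.card_subtype,
    Finset.natCast_card_filter]
  refine Finset.sum_congr rfl fun v _ ↦ ?_
  simp only [functionMatrix, transpose_apply, submatrix_apply, id, one_apply, ite_and, ite_mul,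
    one_mul, zero_mul]

lemma fiberCount_mulVec_one [Semiring R] [Fintype C] (part : V → ι) (c : V → C) (i : ι) :
    (fiberCount R part c *ᵥ 1) i = Nat.card {v // part v = i} := by
  rw [fiberCount, ← mulVec_mulVec, functionMatrix_mulVec, Pi.one_comp, Nat.card_eq_fintype_card,
    Fintype.card_subtype, Finset.natCast_card_filter]
  simp only [functionMatrix, mulVec, dotProduct_one, transpose_apply, submatrix_apply, id,
    one_apply]

lemma transpose_functionMatrix_mul_diagonal_mul [DecidableEq V] [Semiring R] (f : V → R)
    (c : V → C) :
    (functionMatrix R c)ᵀ * diagonal f * functionMatrix R c =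
      diagonal (f ᵥ* functionMatrix R c) := by
  ext i j
  rw [mul_apply, diagonal_apply]
  simp only [mul_diagonal, transpose_apply, functionMatrix, submatrix_apply, id, one_apply,
    vecMul, dotProduct]
  split_ifs with hij
  · subst hij
    refine Finset.sum_congr rfl fun v _ ↦ ?_
    split_ifs <;> simp
  · refine Finset.sum_eq_zero fun v _ ↦ ?_
    by_cases hv : c v = i <;> simp [hv, hij]

variable [Fintype ι] [Fintype C] [CommRing R] [Field K]

lemma componentDegree_fiberCount_pos [LinearOrder R] [IsStrictOrderedRing R] {part : V → ι}
    {c : V → C} (hN : ∀ i, 0 < partDegree (fiberCount R part c) i) (hc : Function.Surjective c)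
    (j : C) : 0 < componentDegree (fiberCount R part c) j := by
  obtain ⟨v, rfl⟩ := hc j
  rw [componentDegree_apply]
  refine Finset.sum_pos' (fun i _ ↦ mul_nonneg (hN i).le ?_)
    ⟨part v, Finset.mem_univ _, mul_pos (hN _) ?_⟩
  · rw [fiberCount_apply]
    exact Nat.cast_nonneg _
  · have : Nonempty {u // part u = part v ∧ c u = c v} := ⟨⟨v, rfl, rfl⟩⟩
    rw [fiberCount_apply, Nat.cast_pos]
    exact Nat.card_pos

lemma quotientLaplacian_indicator_comap [DecidableEq V] (part : V → ι) (c : V → C) :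
    quotientLaplacian c (((⊤ : SimpleGraph ι).comap part).edgeSet.indicator (1 : Sym2 V → R)) =
      diagonal (componentDegree (fiberCount R part c)) -
        (fiberCount R part c)ᵀ * completeAdjacency ι R * fiberCount R part c := by
  set w : Sym2 V → R := ((⊤ : SimpleGraph ι).comap part).edgeSet.indicator 1 with hw
  set Q := functionMatrix R part with hQ
  have hadj : of (fun u v ↦ w s(u, v)) = Q * completeAdjacency ι R * Qᵀ := by
    rw [functionMatrix_mul, ← transpose_inj, transpose_mul, transpose_transpose,
      functionMatrix_mul]
    ext u v
    by_cases h : part u = part v <;> simp [hw, completeAdjacency, one_apply, h, eq_comm]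
  have hdegree : (fun u ↦ ∑ v, w s(u, v)) = Q *ᵥ partDegree (fiberCount R part c) := by
    have hrow : (fun u ↦ ∑ v, w s(u, v)) = of (fun u v ↦ w s(u, v)) *ᵥ 1 := by
      ext u
      rw [mulVec, dotProduct_one]
      rfl
    rw [hrow, hadj, partDegree, fiberCount, ← mulVec_mulVec 1 Qᵀ,
      functionMatrix_mulVec c, Pi.one_comp, mulVec_mulVec, mulVec_mulVec]
  rw [quotientLaplacian, weightedLaplacian, hdegree, hadj, Matrix.mul_sub, Matrix.sub_mul,
    transpose_functionMatrix_mul_diagonal_mul, ← vecMul_transpose, vecMul_vecMul, componentDegree,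
    fiberCount, transpose_mul, transpose_transpose]
  simp only [Matrix.mul_assoc, hQ]

/-- Both sides are evaluated by the matrix-tree theorem, with the rank one perturbations for which
`prod_componentDegree_mul_det_partWeight` compares the determinants. -/
theorem extensionWeight_indicator_comap [Nonempty V] {F : SimpleGraph V} {part : V → ι} {c : V → C}
    (hc : IsComponentMap F c) (hF : F.IsAcyclic) (hd : (Fintype.card ι : K) - 1 ≠ 0)
    (hN : ∀ i, partDegree (fiberCount K part c) i ≠ 0)
    (hα : ∀ j, componentDegree (fiberCount K part c) j ≠ 0)
    (hsum : ∑ j, componentDegree (fiberCount K part c) j ≠ 0) :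
    extensionWeight F (((⊤ : SimpleGraph ι).comap part).edgeSet.indicator (1 : Sym2 V → K)) =
      (∏ j, componentDegree (fiberCount K part c) j) /
        (((Fintype.card ι : K) - 1) ^ (Fintype.card ι - 2) *
          ∏ i, partDegree (fiberCount K part c) i ^ 2) *
        extensionWeight ⊥ (partWeight (fiberCount K part c)) := by
  classical
  have : Nonempty ι := ‹Nonempty V›.map part
  set B := fiberCount K part c
  set S := ∑ j, componentDegree B j
  have hS : ∑ i, (partDegree B * B *ᵥ 1) i = S :=
    (dotProduct_mulVec (partDegree B) B 1).trans (dotProduct_one _)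
  have hdet := prod_componentDegree_mul_det_partWeight hd hα
  rw [← quotientLaplacian_indicator_comap, det_quotientLaplacian_add_vecMulVec hc hF,
    ← quotientLaplacian_id, det_quotientLaplacian_add_vecMulVec isComponentMap_bot_id
      SimpleGraph.isAcyclic_bot] at hdet
  simp only [Pi.smul_apply, smul_eq_mul, ← Finset.mul_sum, hS] at hdet
  have hcard : Fintype.card ι - 1 = Fintype.card ι - 2 + 1 := by
    have hne : Fintype.card ι ≠ 1 := fun h ↦ hd (by simp [h])
    have := Fintype.card_pos (α := ι)
    omega
  rw [hcard, pow_succ] at hdet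
  have hP : ∏ i, partDegree B i ^ 2 ≠ 0 := Finset.prod_ne_zero_iff.2 fun i _ ↦ pow_ne_zero 2 (hN i)
  rw [div_mul_eq_mul_div, eq_div_iff (mul_ne_zero (pow_ne_zero _ hd) hP)]
  refine mul_left_cancel₀ (mul_ne_zero hd (mul_ne_zero hsum hsum)) ?_
  linear_combination hdet

end FiberCount

section SpanningTreeSums

variable {V R : Type*} [Fintype V] [CommRing R]

lemma natCard_eq_extensionWeight_indicator {F G : SimpleGraph V} (hFG : F ≤ G) :
    (Nat.card {T : SimpleGraph V // F ≤ T ∧ T ≤ G ∧ T.IsTree} : R) =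
      extensionWeight F (G.edgeSet.indicator 1) := by
  classical
  have hle (T : SimpleGraph V) :
      (∀ e ∈ ({e | e ∈ T.edgeSet \ F.edgeSet} : Finset (Sym2 V)), e ∈ G.edgeSet) ↔ T ≤ G := by
    rw [← SimpleGraph.edgeSet_subset_edgeSet]
    refine ⟨fun h e he ↦ ?_, fun h e he ↦ h (Finset.mem_filter.1 he).2.1⟩
    by_cases heF : e ∈ F.edgeSet
    · exact SimpleGraph.edgeSet_mono hFG heF
    · exact h e (by simp [he, heF])
  rw [Nat.card_eq_fintype_card, Fintype.card_subtype, Finset.natCast_card_filter, extensionWeight,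
    Finset.sum_filter]
  refine Finset.sum_congr rfl fun T _ ↦ ?_
  simp only [Set.indicator_apply, Pi.one_apply, Finset.prod_boole]
  simp only [hle, and_comm (a := T ≤ G), ite_and]

open Classical in
lemma extensionWeight_bot_eq_finsum [LinearOrder V] (w : Sym2 V → R) :
    extensionWeight ⊥ w = ∑ᶠ T : {T : SimpleGraph V // T.IsTree},
      ∏ p : V × V with p.1 < p.2 ∧ (T : SimpleGraph V).Adj p.1 p.2, w s(p.1, p.2) := by
  have hprod (T : SimpleGraph V) : ∏ e with e ∈ T.edgeSet \ (⊥ : SimpleGraph V).edgeSet, w e =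
      ∏ p : V × V with p.1 < p.2 ∧ T.Adj p.1 p.2, w s(p.1, p.2) := by
    refine (Finset.prod_bij (fun p _ ↦ s(p.1, p.2)) ?_ ?_ ?_ fun _ _ ↦ rfl).symm
    · simp
    · rintro ⟨a, b⟩ h ⟨a', b'⟩ h' hab
      simp only [Finset.mem_filter, Finset.mem_univ, true_and] at h h'
      obtain ⟨rfl, rfl⟩ | ⟨rfl, rfl⟩ := Sym2.eq_iff.1 hab
      · rfl
      · exact absurd h.1 h'.1.asymm
    · intro e he
      induction e with | _ a b =>
      have hab : T.Adj a b := by simpa using he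
      obtain h | h := hab.ne.lt_or_gt
      · exact ⟨(a, b), by simp [h, hab], rfl⟩
      · exact ⟨(b, a), by simp [h, hab.symm], Sym2.eq_swap⟩
  rw [extensionWeight, finsum_eq_sum_of_fintype,
    ← Finset.sum_subtype {T : SimpleGraph V | T.IsTree} (fun T ↦ by simp)
      fun T ↦ ∏ p : V × V with p.1 < p.2 ∧ T.Adj p.1 p.2, w s(p.1, p.2)]
  refine Finset.sum_congr (Finset.ext fun T ↦ by simp) fun T _ ↦ ?_
  convert hprod T

end SpanningTreeSums

section CompleteMultipartite

variable {d : ℕ} {nn : Fin d → ℕ} {F : SimpleGraph (Σ i : Fin d, Fin (nn i))}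

open Classical in
/-- The matrix of the numbers `n_{ij}`. -/
noncomputable def multipartiteMatrix (F : SimpleGraph (Σ i : Fin d, Fin (nn i))) :
    Matrix (Fin d) F.ConnectedComponent ℚ :=
  fiberCount ℚ Sigma.fst F.connectedComponentMk

open Classical in
lemma multipartiteMatrix_apply (i : Fin d) (j : F.ConnectedComponent) :
    multipartiteMatrix F i j = multipartiteNij nn F i j := by
  rw [multipartiteMatrix, fiberCount_apply, multipartiteNij]

variable [Fintype F.ConnectedComponent]

open Matrix in
lemma multipartiteMatrix_mulVec_one (i : Fin d) : (multipartiteMatrix F *ᵥ 1) i = nn i := by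
  classical
  rw [multipartiteMatrix, fiberCount_mulVec_one, Nat.card_congr (Equiv.sigmaSubtype i),
    Nat.card_fin]

lemma partDegree_multipartiteMatrix (i : Fin d) :
    partDegree (multipartiteMatrix F) i = (∑ i', nn i' : ℕ) - (nn i : ℚ) := by
  simp only [partDegree, completeAdjacency_mulVec, multipartiteMatrix_mulVec_one, Nat.cast_sum]

lemma componentDegree_multipartiteMatrix (j : F.ConnectedComponent) :
    componentDegree (multipartiteMatrix F) j = multipartiteAlpha nn F j := by
  simp only [componentDegree_apply, partDegree_multipartiteMatrix, multipartiteMatrix_apply,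
    multipartiteAlpha]

lemma partOverlap_multipartiteMatrix [DecidableEq F.ConnectedComponent] (p q : Fin d) :
    partOverlap (multipartiteMatrix F) p q = multipartiteA nn F p q := by
  simp only [partOverlap_apply, componentDegree_multipartiteMatrix, multipartiteMatrix_apply,
    multipartiteA, finsum_eq_sum_of_fintype]

end CompleteMultipartite

open Classical in
/-- Let `K_{n₁,…,n_d}` (`d ≥ 2`) be the complete multipartite graph
with parts of sizes `n₁, …, n_d`, `n = n₁ + ⋯ + n_d`, and let `F` be a spanning forest
of it with components `T₁, …, T_k`, where `n_{ij}` is the number of vertices of `T_j`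
in the `i`-th part.  With `α_j = Σ_i (n − n_i) n_{ij}` and
`a_{pq} = Σ_j n_{pj} n_{qj} / α_j`, the number of spanning trees of `K_{n₁,…,n_d}`
containing `F` equals
`(∏_j α_j) / ((d−1)^(d−2) ∏_i (n − n_i)²)` times the sum over all spanning trees `T` of
the complete graph `K_d` of the product over the edges `v_p v_q` of `T` of
`(n − n_p)(n − n_q)(1 − (d−1) a_{pq})`. -/
theorem multipartite_forest_extension_count (d : ℕ) (hd : 2 ≤ d)
    (nn : Fin d → ℕ) (hnn : ∀ i, 1 ≤ nn i)
    (F : SimpleGraph (Σ i : Fin d, Fin (nn i)))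
    (hFsub : F ≤ SimpleGraph.completeMultipartiteGraph (fun i => Fin (nn i)))
    (hFacyclic : F.IsAcyclic) :
    (Nat.card {T : SimpleGraph (Σ i : Fin d, Fin (nn i)) //
        F ≤ T ∧ T ≤ SimpleGraph.completeMultipartiteGraph (fun i => Fin (nn i)) ∧
          T.IsTree} : ℚ) =
      (∏ᶠ j : F.ConnectedComponent, multipartiteAlpha nn F j) /
          (((d : ℚ) - 1) ^ (d - 2) *
            ∏ i : Fin d, ((∑ i', nn i' : ℕ) - (nn i : ℚ)) ^ 2) *
        ∑ᶠ T : {T : SimpleGraph (Fin d) // T.IsTree},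
          ∏ pq ∈ Finset.univ.filter
              (fun pq : Fin d × Fin d => pq.1 < pq.2 ∧ (T : SimpleGraph (Fin d)).Adj pq.1 pq.2),
            ((∑ i', nn i' : ℕ) - (nn pq.1 : ℚ)) * ((∑ i', nn i' : ℕ) - (nn pq.2 : ℚ)) *
              (1 - ((d : ℚ) - 1) * multipartiteA nn F pq.1 pq.2) := by
  have := Fintype.ofFinite F.ConnectedComponent
  have : Nontrivial (Fin d) := Fin.nontrivial_iff_two_le.2 hd
  let r : Σ i : Fin d, Fin (nn i) := ⟨⟨0, by omega⟩, ⟨0, hnn _⟩⟩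
  have : Nonempty (Σ i : Fin d, Fin (nn i)) := ⟨r⟩
  have hd1 : (Fintype.card (Fin d) : ℚ) - 1 ≠ 0 := by
    rw [Fintype.card_fin, sub_ne_zero]
    exact_mod_cast (by omega : d ≠ 1)
  have hN (i : Fin d) : 0 < partDegree (multipartiteMatrix F) i :=
    partDegree_pos (fun i ↦ by
      rw [multipartiteMatrix_mulVec_one]
      exact_mod_cast hnn i) i
  have hc := isComponentMap_connectedComponentMk F
  have hα (j : F.ConnectedComponent) : 0 < componentDegree (multipartiteMatrix F) j :=
    componentDegree_fiberCount_pos hN hc.surjective j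
  have hsum : 0 < ∑ j, componentDegree (multipartiteMatrix F) j :=
    Finset.sum_pos (fun j _ ↦ hα j) ⟨F.connectedComponentMk r, Finset.mem_univ _⟩
  rw [natCard_eq_extensionWeight_indicator hFsub, extensionWeight_indicator_comap hc hFacyclic hd1
    (fun i ↦ (hN i).ne') (fun j ↦ (hα j).ne') hsum.ne', ← multipartiteMatrix,
    extensionWeight_bot_eq_finsum, finprod_eq_prod_of_fintype]
  simp only [partWeight, Sym2.lift_mk, partDegree_multipartiteMatrix,
    componentDegree_multipartiteMatrix, partOverlap_multipartiteMatrix, Fintype.card_fin]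
end
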